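/- arXiv:1907.10563 — 6 statements merged into one kernel-verified Lean document; each statement's English description precedes it below -/
import Mathlib

section
/- Let 0 < p < ∞ and let ω be a regular radial weight. Then there exists a constant C ≥ 1 such that C^{-1}‖f‖_{A^p_ω} ≤ ‖Re f‖_{L^p_ω} ≤ C‖f‖_{A^p_ω} for every analytic f on 𝔻 with Im f(0) = 0. -/
/-!
Only the bound of `‖f‖` by `‖Re f‖` needs an argument. Write `u = Re f` and let `η` be small.

*Local estimates.* For every `p > 0`, `|u| ^ p` has the sub-mean value property up to a constant.
Combined with the Borel-Carathéodory theorem this bounds `|f(w) - f(z)| ^ p`, for `w` in a disc of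
centre `z`, by the mean of `|u| ^ p` over a larger concentric disc. The discs used are the Whitney
discs of centre `z` and radius `η (1 - |z|)`.

*The weight.* A regular weight is comparable to `W(r) = ω̂(r) / (1 - r)`, which is almost constant
on Whitney discs and satisfies, with `κ = η / 4` and some `q < 1`,
`W((s + κ) / (1 + κ)) ≤ (1 + κ) q W(s)`.

*Absorption along radii.* For `z = r e^{iθ}` let `w = ((1 + κ) r - κ) e^{iθ}`. Then
`|f(z)| ^ p ≤ (1 + δ) ^ p |f(w)| ^ p + C_δ |f(z) - f(w)| ^ p`, and the last term is at most a
Whitney average of `|u| ^ p`. Integrating against `W` and changing variables in `r`, the first term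
contributes at most `(1 + δ) ^ p q` times the left-hand side, and `δ` is taken so small that this is
absorbed. Points with `|z| < κ / (1 + κ)` are handled by the local estimates at the origin, where
`Im f(0) = 0` gives `|f(0)| = |u(0)|`. Fubini over Whitney discs concludes.

With lower Lebesgue integrals infinite norms need no separate treatment until the last step: there
the two integrals are finite or infinite together, and in the second case both Bochner integrals
have the junk value `0`.
-/

open MeasureTheory Set

/-- Tail integral `ω̂(r) = ∫_r^1 ω(s) ds`. -/
noncomputable def tailInt (ω : ℝ → ℝ) (r : ℝ) : ℝ := ∫ s in r..1, ω s

/-- A radial weight: nonnegative, integrable on `[0,1)`, with positive tails. -/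
def RadialWeight (ω : ℝ → ℝ) : Prop :=
  (∀ r ∈ Set.Ico (0:ℝ) 1, 0 ≤ ω r) ∧ MeasureTheory.IntegrableOn ω (Set.Ico 0 1) ∧
    ∀ r ∈ Set.Ico (0:ℝ) 1, 0 < tailInt ω r

/-- The class `D̂` of upper doubling weights. -/
def Dhat (ω : ℝ → ℝ) : Prop :=
  ∃ C : ℝ, 1 ≤ C ∧ ∀ r ∈ Set.Ico (0:ℝ) 1, tailInt ω r ≤ C * tailInt ω ((1 + r) / 2)

/-- The class `Ď`. -/
def Dcheck (ω : ℝ → ℝ) : Prop :=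
  ∃ K C : ℝ, 1 < K ∧ 1 < C ∧ ∀ r ∈ Set.Ico (0:ℝ) 1,
    C * tailInt ω (1 - (1 - r) / K) ≤ tailInt ω r

/-- The associated weight `ω̃(r) = ω̂(r)/(1-r)`. -/
noncomputable def assocW (ω : ℝ → ℝ) (r : ℝ) : ℝ := tailInt ω r / (1 - r)

/-- `‖f‖_{A^p_ω}^p = ∫_𝔻 |f|^p ω dA`, with `dA` the normalized area measure. -/
noncomputable def ApNorm (p : ℝ) (ω : ℝ → ℝ) (f : ℂ → ℂ) : ℝ :=
  Real.pi⁻¹ * ∫ z in Metric.ball (0:ℂ) 1, ‖f z‖ ^ p * ω ‖z‖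

/-- `‖Re f‖_{L^p_ω}^p = ∫_𝔻 |Re f|^p ω dA`. -/
noncomputable def LpReNorm (p : ℝ) (ω : ℝ → ℝ) (f : ℂ → ℂ) : ℝ :=
  Real.pi⁻¹ * ∫ z in Metric.ball (0:ℂ) 1, |(f z).re| ^ p * ω ‖z‖

/-- `M_p^p(s, Re f)`, the `p`-th power of the `p`-mean of `Re f` on the circle of radius `s`. -/
noncomputable def Mpp (p : ℝ) (f : ℂ → ℂ) (s : ℝ) : ℝ :=
  (2 * Real.pi)⁻¹ * ∫ θ in (0:ℝ)..(2 * Real.pi),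
    |(f ((s : ℂ) * Complex.exp ((θ : ℂ) * Complex.I))).re| ^ p

/-- `sup_{0<s<r} M_p^p(s, Re f)`. -/
noncomputable def supMpp (p : ℝ) (f : ℂ → ℂ) (r : ℝ) : ℝ :=
  sSup ((fun s => Mpp p f s) '' Set.Ioo (0:ℝ) r)

open Filter Metric InnerProductSpace Module
open scoped ENNReal NNReal Topology Real

theorem add_rpow_le_mul_rpow_add_mul_rpow {p : ℝ} (hp : 0 ≤ p) {δ : ℝ≥0} (hδ : δ ≠ 0)
    (a b : ℝ≥0∞) :
    (a + b) ^ p ≤ (1 + δ : ℝ≥0) ^ p * a ^ p + (1 + δ⁻¹ : ℝ≥0) ^ p * b ^ p := by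
  rw [← ENNReal.mul_rpow_of_nonneg _ _ hp, ← ENNReal.mul_rpow_of_nonneg _ _ hp]
  rcases le_total b (δ * a) with h | h
  · refine le_add_right (ENNReal.rpow_le_rpow ?_ hp)
    calc a + b ≤ a + δ * a := by gcongr
      _ = (1 + δ : ℝ≥0) * a := by push_cast; ring
  · refine le_add_left (ENNReal.rpow_le_rpow ?_ hp)
    have h' : a ≤ (δ⁻¹ : ℝ≥0) * b := by
      rwa [ENNReal.coe_inv hδ, mul_comm, ← div_eq_mul_inv,
        ENNReal.le_div_iff_mul_le (by simp [hδ]) (by simp), mul_comm]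
    calc a + b ≤ (δ⁻¹ : ℝ≥0) * b + b := by gcongr
      _ = (1 + δ⁻¹ : ℝ≥0) * b := by push_cast; ring

theorem le_inv_one_sub_mul_of_le_add_mul {a x : ℝ≥0∞} {c : ℝ≥0} (hx : x ≠ ⊤) (hc : c < 1)
    (h : x ≤ a + c * x) : x ≤ ((1 - c)⁻¹ : ℝ≥0) * a := by
  have hsub : (1 - c : ℝ≥0) * x ≤ a := by
    rw [ENNReal.coe_sub, ENNReal.coe_one, ENNReal.sub_mul fun _ _ => hx, one_mul]
    exact tsub_le_iff_right.2 h
  have hpos : ((1 - c : ℝ≥0) : ℝ≥0∞) ≠ 0 := ENNReal.coe_ne_zero.2 (tsub_pos_of_lt hc).ne'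
  rwa [ENNReal.coe_inv (tsub_pos_of_lt hc).ne', mul_comm, ← div_eq_mul_inv,
    ENNReal.le_div_iff_mul_le (Or.inl hpos) (Or.inl ENNReal.coe_ne_top), mul_comm]

theorem rpow_le_mul_lintegral_rpow {α : Type*} [MeasurableSpace α] {μ : Measure α}
    [IsProbabilityMeasure μ] {p : ℝ} (hp : 0 < p) {a : ℝ≥0∞} {L : ℝ≥0} {g : α → ℝ≥0∞}
    (ha : a ≠ ⊤) (hmean : a ≤ ∫⁻ x, g x ∂μ) (hbound : ∀ᵐ x ∂μ, g x ≤ L * a) :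
    a ^ p ≤ 2 * 2 ^ p * L * ∫⁻ x, g x ^ p ∂μ := by
  rcases eq_or_ne a 0 with rfl | ha0
  · simp [ENNReal.zero_rpow_of_pos hp]
  have hap : a ^ p ≠ ⊤ := ENNReal.rpow_ne_top_of_nonneg hp.le ha
  have hC : 2 ^ p * L * a ≠ ⊤ := by finiteness
  have hpointwise : ∀ᵐ x ∂μ, a ^ p * g x ≤ a ^ p * (a / 2) + 2 ^ p * L * a * g x ^ p := by
    filter_upwards [hbound] with x hx
    rcases le_total (g x) (a / 2) with hsmall | hlarge
    · exact le_add_right (by gcongr)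
    · have ha_le : a ≤ 2 * g x := by
        rwa [ENNReal.div_le_iff' two_ne_zero ENNReal.ofNat_ne_top] at hlarge
      refine le_add_left ?_
      calc a ^ p * g x ≤ (2 * g x) ^ p * (L * a) := by gcongr
        _ = 2 ^ p * L * a * g x ^ p := by rw [ENNReal.mul_rpow_of_nonneg _ _ hp.le]; ring
  have hintegrated : a ^ p * a ≤ a ^ p * (a / 2) + 2 ^ p * L * a * ∫⁻ x, g x ^ p ∂μ :=
    calc a ^ p * a ≤ ∫⁻ x, a ^ p * g x ∂μ := by rw [lintegral_const_mul' _ _ hap]; gcongr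
      _ ≤ ∫⁻ x, (a ^ p * (a / 2) + 2 ^ p * L * a * g x ^ p) ∂μ := lintegral_mono_ae hpointwise
      _ = a ^ p * (a / 2) + 2 ^ p * L * a * ∫⁻ x, g x ^ p ∂μ := by
        rw [lintegral_add_left measurable_const, lintegral_const, measure_univ, mul_one,
          lintegral_const_mul' _ _ hC]
  have hhalf : a ^ p * (a / 2) ≤ 2 ^ p * L * a * ∫⁻ x, g x ^ p ∂μ := by
    rw [← ENNReal.add_le_add_iff_left (a := a ^ p * (a / 2)) (by finiteness), ← mul_add,
      ENNReal.add_halves]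
    exact hintegrated
  refine (ENNReal.mul_le_mul_iff_left ha0 ha).1 ?_
  calc a ^ p * a = 2 * (a ^ p * (a / 2)) := by
        rw [mul_left_comm, ENNReal.mul_div_cancel two_ne_zero ENNReal.ofNat_ne_top]
    _ ≤ 2 * (2 ^ p * L * a * ∫⁻ x, g x ^ p ∂μ) := by gcongr
    _ = 2 * 2 ^ p * L * (∫⁻ x, g x ^ p ∂μ) * a := by ring

theorem setLIntegral_Ico_le_of_forall_lt {a b : ℝ} {f : ℝ → ℝ≥0∞} {C : ℝ≥0∞}
    (h : ∀ R < b, ∫⁻ r in Ico a R, f r ≤ C) : ∫⁻ r in Ico a b, f r ≤ C := by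
  obtain ⟨R, hR_mono, hR_lt, hR_lim⟩ := exists_seq_strictMono_tendsto b
  have hunion : Ico a b = ⋃ n, Ico a (R n) := by
    ext r
    simp only [mem_Ico, mem_iUnion, exists_and_left, and_congr_right_iff]
    exact fun _ => ⟨fun hr => (hR_lim.eventually_const_lt hr).exists,
      fun ⟨n, hn⟩ => hn.trans (hR_lt n)⟩
  rw [hunion, setLIntegral_iUnion_of_directed]
  · exact iSup_le fun n => h _ (hR_lt n)
  · exact (monotone_nat_of_le_succ fun n =>
      Ico_subset_Ico_right (hR_mono n.lt_succ_self).le).directed_le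

theorem measurable_indicator_of_continuousOn {α β : Type*} [TopologicalSpace α]
    [MeasurableSpace α] [OpensMeasurableSpace α] [TopologicalSpace β] [MeasurableSpace β]
    [BorelSpace β] [Zero β] {s : Set α} {f : α → β} (hf : ContinuousOn f s)
    (hs : MeasurableSet s) : Measurable (s.indicator f) := by
  classical
  rw [← piecewise_eq_indicator]
  exact hf.measurable_piecewise continuousOn_const hs

/-! ### Integration in polar coordinates -/

/-- The angular integral of `F` over the circle with centre `c` and radius `r`. The angle runs over
`(-π, π)`, the range of Mathlib's polar coordinates, and the total mass is `2π`. -/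
noncomputable def circleLIntegral (F : ℂ → ℝ≥0∞) (c : ℂ) (r : ℝ) : ℝ≥0∞ :=
  ∫⁻ θ in Ioo (-π) π, F (circleMap c r θ)

theorem measurable_uncurry_circleMap (c : ℂ) :
    Measurable fun q : ℝ × ℝ => circleMap c q.1 q.2 := by
  unfold circleMap; fun_prop

theorem measurable_circleLIntegral {F : ℂ → ℝ≥0∞} (hF : Measurable F) (c : ℂ) :
    Measurable (circleLIntegral F c) :=
  (hF.comp (measurable_uncurry_circleMap c)).lintegral_prod_right'

theorem circleLIntegral_mono {F G : ℂ → ℝ≥0∞} {c : ℂ} {r : ℝ}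
    (h : ∀ z ∈ sphere c |r|, F z ≤ G z) : circleLIntegral F c r ≤ circleLIntegral G c r :=
  lintegral_mono fun θ => h _ (circleMap_mem_sphere' c r θ)

theorem circleLIntegral_mul_norm {F : ℂ → ℝ≥0∞} (hF : Measurable F) (V : ℝ → ℝ≥0∞) {r : ℝ}
    (hr : 0 ≤ r) :
    circleLIntegral (fun z => F z * V ‖z‖) 0 r = circleLIntegral F 0 r * V r := by
  simp only [circleLIntegral, norm_circleMap_zero, abs_of_nonneg hr]
  exact lintegral_mul_const _ (by fun_prop)

theorem lintegral_eq_lintegral_circleLIntegral {F : ℂ → ℝ≥0∞} (hF : Measurable F) (c : ℂ) :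
    ∫⁻ z, F z = ∫⁻ r in Ioi (0 : ℝ), ENNReal.ofReal r * circleLIntegral F c r := by
  have hcircle : ∀ q : ℝ × ℝ, c + Complex.polarCoord.symm q = circleMap c q.1 q.2 := fun q => by
    simp [circleMap, Complex.polarCoord_symm_apply, Complex.exp_mul_I]
  have : Measurable fun q : ℝ × ℝ => F (circleMap c q.1 q.2) :=
    hF.comp (measurable_uncurry_circleMap c)
  calc ∫⁻ z, F z = ∫⁻ z, F (c + z) := (lintegral_add_left_eq_self F c).symm
    _ = ∫⁻ q in Ioi (0 : ℝ) ×ˢ Ioo (-π) π, ENNReal.ofReal q.1 * F (circleMap c q.1 q.2) := by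
      rw [← Complex.lintegral_comp_polarCoord_symm, polarCoord_target]
      simp only [smul_eq_mul, hcircle]
    _ = ∫⁻ r in Ioi (0 : ℝ), ENNReal.ofReal r * circleLIntegral F c r := by
      rw [Measure.volume_eq_prod, ← Measure.prod_restrict, lintegral_prod _ (by fun_prop)]
      exact lintegral_congr fun r => lintegral_const_mul (ENNReal.ofReal r) (by fun_prop)

theorem setLIntegral_ball_eq_lintegral_circleLIntegral {F : ℂ → ℝ≥0∞} (hF : Measurable F) (c : ℂ)
    (R : ℝ) :
    ∫⁻ z in ball c R, F z = ∫⁻ r in Ioo 0 R, ENNReal.ofReal r * circleLIntegral F c r := by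
  have hcircle : ∀ r ∈ Ioi (0 : ℝ),
      ENNReal.ofReal r * circleLIntegral ((ball c R).indicator F) c r =
        (Iio R).indicator (fun r => ENNReal.ofReal r * circleLIntegral F c r) r := fun r hr => by
    by_cases hrR : r < R <;>
      simp [circleLIntegral, indicator, circleMap, abs_of_pos (mem_Ioi.1 hr), hrR]
  rw [← lintegral_indicator measurableSet_ball,
    lintegral_eq_lintegral_circleLIntegral (hF.indicator measurableSet_ball) c,
    setLIntegral_congr_fun measurableSet_Ioi hcircle, setLIntegral_indicator measurableSet_Iio,
    inter_comm, Ioi_inter_Iio]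

theorem setLIntegral_unitBall_mul_norm {F : ℂ → ℝ≥0∞} (hF : Measurable F) {V : ℝ → ℝ≥0∞}
    (hV : Measurable V) :
    ∫⁻ z in ball (0 : ℂ) 1, F z * V ‖z‖ =
      ∫⁻ r in Ioo (0 : ℝ) 1, ENNReal.ofReal r * (circleLIntegral F 0 r * V r) := by
  rw [setLIntegral_ball_eq_lintegral_circleLIntegral (by fun_prop)]
  exact setLIntegral_congr_fun measurableSet_Ioo fun r hr => by
    simp only [circleLIntegral_mul_norm hF V hr.1.le]

theorem setLIntegral_unitBall_mul_norm_le {F : ℂ → ℝ≥0∞} (hF : Measurable F) {V : ℝ → ℝ≥0∞}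
    (hV : Measurable V) :
    ∫⁻ z in ball (0 : ℂ) 1, F z * V ‖z‖ ≤ ∫⁻ r in Ico (0 : ℝ) 1, circleLIntegral F 0 r * V r := by
  rw [setLIntegral_unitBall_mul_norm hF hV]
  refine (setLIntegral_mono' measurableSet_Ioo fun r hr => ?_).trans
    (lintegral_mono_set Ioo_subset_Ico_self)
  exact mul_le_of_le_one_left' (ENNReal.ofReal_le_one.2 hr.2.le)

theorem setLIntegral_circleLIntegral_mul_le {F : ℂ → ℝ≥0∞} (hF : Measurable F) {V : ℝ → ℝ≥0∞}
    (hV : Measurable V) {r₀ : ℝ} (hr₀ : 0 < r₀) :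
    ∫⁻ r in Ico r₀ 1, circleLIntegral F 0 r * V r ≤
      ENNReal.ofReal r₀⁻¹ * ∫⁻ z in ball (0 : ℂ) 1, F z * V ‖z‖ := by
  rw [setLIntegral_unitBall_mul_norm hF hV, ← lintegral_const_mul' _ _ ENNReal.ofReal_ne_top]
  refine (setLIntegral_mono' measurableSet_Ico fun r hr => ?_).trans
    (lintegral_mono_set (t := Ioo 0 1) fun r hr => ⟨hr₀.trans_le hr.1, hr.2⟩)
  have hone : 1 ≤ r₀⁻¹ * r := by rw [inv_mul_eq_div, one_le_div hr₀]; exact hr.1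
  rw [← mul_assoc, ← ENNReal.ofReal_mul (by positivity)]
  exact le_mul_of_one_le_left' (ENNReal.one_le_ofReal.2 hone)

/-! ### Sub-mean value estimates -/

section

variable {F : Type*} [NormedAddCommGroup F] [NormedSpace ℝ F] [CompleteSpace F]

theorem circleLIntegral_const_le_of_harmonicOnNhd {u : ℂ → F} {c : ℂ} {r : ℝ}
    (hu : HarmonicOnNhd u (closedBall c |r|)) :
    circleLIntegral (fun _ => ‖u c‖ₑ) c r ≤ circleLIntegral (fun z => ‖u z‖ₑ) c r := by
  have hmean : ∫ θ in Ioo (-π) π, u (circleMap c r θ) = (2 * π) • u c := by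
    rw [← integral_Ioc_eq_integral_Ioo, ← intervalIntegral.integral_of_le
      (by linarith [Real.pi_pos]), ← hu.circleAverage_eq, Real.circleAverage_eq_integral_add (-π),
      smul_inv_smul₀ (by positivity),
      intervalIntegral.integral_comp_add_right fun θ => u (circleMap c r θ)]
    ring_nf
  calc circleLIntegral (fun _ => ‖u c‖ₑ) c r = ‖∫ θ in Ioo (-π) π, u (circleMap c r θ)‖ₑ := by
        rw [hmean, enorm_smul, circleLIntegral, setLIntegral_const, Real.volume_Ioo, mul_comm,
          Real.enorm_of_nonneg (by positivity)]
        ring_nf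
    _ ≤ circleLIntegral (fun z => ‖u z‖ₑ) c r := enorm_integral_le_lintegral_enorm _

theorem enorm_le_setLAverage_ball_of_harmonicOnNhd {u : ℂ → F} {c : ℂ} {R : ℝ} (hR : 0 < R)
    (hu : HarmonicOnNhd u (ball c R)) : ‖u c‖ₑ ≤ ⨍⁻ z in ball c R, ‖u z‖ₑ ∂volume := by
  have hvol : volume (ball c R) ≠ 0 := (measure_ball_pos volume c hR).ne'
  have hvol' : volume (ball c R) ≠ ⊤ := measure_ball_lt_top.ne
  have hm : Measurable ((ball c R).indicator fun z => ‖u z‖ₑ) :=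
    measurable_indicator_of_continuousOn hu.continuousOn.enorm measurableSet_ball
  rw [← setLAverage_const hvol hvol' ‖u c‖ₑ, setLAverage_eq, setLAverage_eq]
  refine ENNReal.div_le_div_right ?_ _
  rw [setLIntegral_ball_eq_lintegral_circleLIntegral measurable_const]
  calc _ ≤ ∫⁻ r in Ioo 0 R, ENNReal.ofReal r *
          circleLIntegral ((ball c R).indicator fun z => ‖u z‖ₑ) c r := by
        refine setLIntegral_mono' measurableSet_Ioo fun r hr => ?_
        gcongr
        have hsub : closedBall c |r| ⊆ ball c R :=
          closedBall_subset_ball (by rw [abs_of_pos hr.1]; exact hr.2)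
        refine (circleLIntegral_const_le_of_harmonicOnNhd (hu.mono hsub)).trans
          (circleLIntegral_mono fun z hz => ?_)
        rw [indicator_of_mem (hsub (sphere_subset_closedBall hz))]
    _ = ∫⁻ z in ball c R, ‖u z‖ₑ := by
        rw [← setLIntegral_ball_eq_lintegral_circleLIntegral hm]
        exact setLIntegral_congr_fun measurableSet_ball fun z hz => indicator_of_mem hz _

end

theorem exists_isMaxOn_mul_rpow_dist {X : Type*} [PseudoMetricSpace X] [ProperSpace X]
    {g : X → ℝ≥0} {z : X} {d s : ℝ} (hd : 0 ≤ d) (hs : 0 ≤ s)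
    (hg : ContinuousOn g (closedBall z d)) :
    ∃ w ∈ closedBall z d,
      IsMaxOn (fun x => g x * (d - dist x z).toNNReal ^ s) (closedBall z d) w ∧
      ∀ x ∈ ball w ((d - dist w z) / 2), g x ≤ 2 ^ s * g w := by
  have hcont : ContinuousOn (fun x => g x * (d - dist x z).toNNReal ^ s) (closedBall z d) :=
    hg.mul (Continuous.continuousOn (by fun_prop (disch := positivity)))
  obtain ⟨w, hw, hmax⟩ :=
    (isCompact_closedBall z d).exists_isMaxOn (nonempty_closedBall.2 hd) hcont
  refine ⟨w, hw, hmax, fun x hx => ?_⟩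
  obtain ⟨D, hD⟩ : ∃ D, D = (d - dist w z).toNNReal / 2 := ⟨_, rfl⟩
  have hDpos : 0 < D := by
    rw [hD]; exact half_pos (Real.toNNReal_pos.2 (by linarith [pos_of_mem_ball hx]))
  have hdist : (d - dist w z) / 2 ≤ d - dist x z := by
    linarith [dist_triangle x w z, mem_ball.1 hx]
  have hDx : D ≤ (d - dist x z).toNNReal := by
    rw [hD, ← Real.toNNReal_ofNat, ← Real.toNNReal_div' zero_le_two]
    exact Real.toNNReal_le_toNNReal hdist
  have hx_mem : x ∈ closedBall z d := mem_closedBall.2 (by linarith [pos_of_mem_ball hx])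
  refine le_of_mul_le_mul_right ?_ (NNReal.rpow_pos (p := s) hDpos)
  calc g x * D ^ s ≤ g x * (d - dist x z).toNNReal ^ s := by gcongr
    _ ≤ g w * (d - dist w z).toNNReal ^ s := hmax hx_mem
    _ = g w * (2 * D) ^ s := by rw [hD, mul_div_cancel₀ _ two_ne_zero]
    _ = 2 ^ s * g w * D ^ s := by rw [NNReal.mul_rpow]; ring

section

variable {E : Type*} [NormedAddCommGroup E] [NormedSpace ℝ E] [FiniteDimensional ℝ E]
  [MeasurableSpace E] [BorelSpace E] (μ : Measure E) [μ.IsAddHaarMeasure]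

theorem addHaar_ball_eq_pow_mul_addHaar_ball (w z : E) {r R : ℝ} (hr : 0 < r) (hR : 0 < R) :
    μ (ball z R) = ENNReal.ofReal (R / r) ^ finrank ℝ E * μ (ball w r) := by
  rw [Measure.addHaar_ball_of_pos μ z hR, Measure.addHaar_ball_of_pos μ w hr,
    ENNReal.ofReal_pow hR.le, ENNReal.ofReal_pow hr.le, ← mul_assoc, ← mul_pow,
    ← ENNReal.ofReal_mul (by positivity), div_mul_cancel₀ _ hr.ne']

theorem setLAverage_ball_le_of_subset {w z : E} {r R : ℝ} (hr : 0 < r)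
    (hsub : ball w r ⊆ ball z R) (g : E → ℝ≥0∞) :
    ⨍⁻ x in ball w r, g x ∂μ ≤
      ENNReal.ofReal (R / r) ^ finrank ℝ E * ⨍⁻ x in ball z R, g x ∂μ := by
  have hR : 0 < R := pos_of_mem_ball (hsub (mem_ball_self hr))
  have hratio : ENNReal.ofReal (R / r) ^ finrank ℝ E ≠ 0 :=
    pow_ne_zero _ (ENNReal.ofReal_pos.2 (div_pos hR hr)).ne'
  rw [setLAverage_eq, setLAverage_eq, addHaar_ball_eq_pow_mul_addHaar_ball μ w z hr hR,
    ← mul_div_assoc, ENNReal.mul_div_mul_left _ _ hratio (by finiteness)]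
  gcongr

theorem rpow_le_mul_setLAverage_rpow_of_le {p : ℝ} (hp : 0 < p) {g : E → ℝ≥0∞} {w z : E}
    {r d : ℝ} (hr : 0 < r) (hsub : ball w r ⊆ ball z d) (hgw : g w ≠ ⊤) {L : ℝ≥0}
    (hmean : g w ≤ ⨍⁻ x in ball w r, g x ∂μ) (hbound : ∀ x ∈ ball w r, g x ≤ L * g w) :
    g w ^ p ≤
      2 * 2 ^ p * L * ENNReal.ofReal (d / r) ^ finrank ℝ E * ⨍⁻ x in ball z d, g x ^ p ∂μ := by
  have : NeZero (μ.restrict (ball w r)) := ⟨by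
    simpa using (measure_ball_pos μ w hr).ne'⟩
  have : IsFiniteMeasure (μ.restrict (ball w r)) := ⟨by simpa using measure_ball_lt_top⟩
  have hbound' : ∀ᵐ x ∂(μ.restrict (ball w r) univ)⁻¹ • μ.restrict (ball w r), g x ≤ L * g w :=
    Measure.ae_smul_measure ((ae_restrict_mem measurableSet_ball).mono hbound) _
  rw [mul_assoc _ (_ ^ finrank ℝ E)]
  exact (rpow_le_mul_lintegral_rpow hp hgw hmean hbound').trans
    (mul_le_mul_right (setLAverage_ball_le_of_subset μ hr hsub _) _)

-- Jensen's inequality fails for `p < 1`. The mean value hypothesis is therefore applied not at `z`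
-- but at a maximum point `w` of `g x * (d - dist x z) ^ (n / p)`, since on a ball about `w` the
-- function `g` is at most a multiple of `g w`.
theorem rpow_le_mul_setLAverage_rpow [Nontrivial E] {p : ℝ} (hp : 0 < p) {g : E → ℝ≥0}
    {z : E} {d : ℝ} (hd : 0 < d) (hg : ContinuousOn g (closedBall z d))
    (hmean : ∀ w r, 0 < r → ball w r ⊆ ball z d →
      (g w : ℝ≥0∞) ≤ ⨍⁻ x in ball w r, (g x : ℝ≥0∞) ∂μ) :
    (g z : ℝ≥0∞) ^ p ≤
      2 * 2 ^ p * (2 ^ (finrank ℝ E / p) : ℝ≥0) * 2 ^ finrank ℝ E *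
        ⨍⁻ x in ball z d, (g x : ℝ≥0∞) ^ p ∂μ := by
  set n := finrank ℝ E with hn
  obtain ⟨w, hw, hmax, hbound⟩ := exists_isMaxOn_mul_rpow_dist (s := n / p) hd.le (by positivity) hg
  have hpow : ∀ x, (g x * (d - dist x z).toNNReal ^ (n / p)) ^ p =
      g x ^ p * (d - dist x z).toNNReal ^ n := fun x => by
    rw [NNReal.mul_rpow, ← NNReal.rpow_mul, div_mul_cancel₀ _ hp.ne', NNReal.rpow_natCast]
  have hmax_pow : (g z : ℝ≥0∞) ^ p * ENNReal.ofReal d ^ n ≤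
      (g w : ℝ≥0∞) ^ p * ENNReal.ofReal (d - dist w z) ^ n := by
    have := NNReal.rpow_le_rpow (hmax (mem_closedBall_self hd.le)) hp.le
    rw [hpow, hpow, dist_self, sub_zero] at this
    rw [← ENNReal.coe_rpow_of_nonneg _ hp.le, ← ENNReal.coe_rpow_of_nonneg _ hp.le]
    unfold ENNReal.ofReal
    exact_mod_cast this
  have hd_ne : ENNReal.ofReal d ^ n ≠ 0 := pow_ne_zero _ (ENNReal.ofReal_pos.2 hd).ne'
  refine (ENNReal.mul_le_mul_iff_left hd_ne (by finiteness)).1 (hmax_pow.trans ?_)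
  rcases (sub_nonneg.2 (mem_closedBall.1 hw)).eq_or_lt with hzero | hpos
  · rw [← hzero, ENNReal.ofReal_zero, zero_pow finrank_pos.ne', mul_zero]
    exact zero_le
  have hsub : ball w ((d - dist w z) / 2) ⊆ ball z d := ball_subset_ball' (by linarith)
  have hw_le := rpow_le_mul_setLAverage_rpow_of_le μ (g := fun x => g x) hp (half_pos hpos) hsub
    ENNReal.coe_ne_top (hmean _ _ (half_pos hpos) hsub) (by exact_mod_cast hbound)
  have hscale : ENNReal.ofReal (d / ((d - dist w z) / 2)) ^ n * ENNReal.ofReal (d - dist w z) ^ n =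
      2 ^ n * ENNReal.ofReal d ^ n := by
    rw [← mul_pow, ← mul_pow, ← ENNReal.ofReal_mul (by positivity), ← ENNReal.ofReal_ofNat,
      ← ENNReal.ofReal_mul zero_le_two]
    congr 2
    field_simp
  refine (mul_le_mul_left hw_le _).trans_eq ?_
  rw [← hn, mul_right_comm, mul_assoc _ (_ ^ n) (_ ^ n), hscale]
  ring

end

/-! ### Local estimates of `f` by its real part -/

theorem exists_enorm_rpow_le_mul_setLAverage_of_harmonicOnNhd {F : Type*} [NormedAddCommGroup F]
    [NormedSpace ℝ F] [CompleteSpace F] {p : ℝ} (hp : 0 < p) :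
    ∃ C : ℝ≥0, ∀ {u : ℂ → F} {z : ℂ} {d : ℝ}, 0 < d → HarmonicOnNhd u (ball z d) →
      ‖u z‖ₑ ^ p ≤ C * ⨍⁻ x in ball z d, ‖u x‖ₑ ^ p ∂volume := by
  refine ⟨2 * 2 ^ p * 2 ^ (2 / p) * 2 ^ 2 * 2 ^ 2, fun {u z d} hd hu => ?_⟩
  have hsub : closedBall z (d / 2) ⊆ ball z d := closedBall_subset_ball (half_lt_self hd)
  have hhalf := rpow_le_mul_setLAverage_rpow volume hp (half_pos hd)
    (hu.mono hsub).continuousOn.nnnorm fun w r hr hwr =>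
      enorm_le_setLAverage_ball_of_harmonicOnNhd hr
        (hu.mono (hwr.trans (ball_subset_closedBall.trans hsub)))
  have hgrow := setLAverage_ball_le_of_subset volume (half_pos hd)
    (ball_subset_closedBall.trans hsub) fun x => ‖u x‖ₑ ^ p
  rw [Complex.finrank_real_complex] at hhalf hgrow
  rw [div_div_cancel₀ hd.ne', ENNReal.ofReal_ofNat] at hgrow
  refine hhalf.trans ((mul_le_mul_right hgrow _).trans_eq ?_)
  rw [← mul_assoc]
  push_cast [ENNReal.coe_rpow_of_nonneg _ hp.le]
  rfl

theorem norm_sub_le_of_abs_re_le {f : ℂ → ℂ} {z w : ℂ} {R M : ℝ}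
    (hf : DifferentiableOn ℂ f (ball z R)) (hM : ∀ x ∈ ball z R, |(f x).re| ≤ M)
    (hw : w ∈ ball z R) : ‖f w - f z‖ ≤ 4 * M * dist w z / (R - dist w z) := by
  have hR : 0 < R := pos_of_mem_ball hw
  have hM₀ : 0 ≤ M := (abs_nonneg _).trans (hM z (mem_ball_self hR))
  have hdiff : DifferentiableOn ℂ (fun x => f (z + x) - f z) (ball 0 R) :=
    (hf.comp (by fun_prop) fun x hx => by simpa using hx).sub_const _
  have hball : w - z ∈ ball (0 : ℂ) R := by simpa [← dist_eq_norm] using hw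
  have hre : ∀ x ∈ ball (0 : ℂ) R, (f (z + x) - f z).re ≤ 2 * M := fun x hx => by
    have h₁ := hM (z + x) (by simpa using hx)
    have h₂ := hM z (mem_ball_self hR)
    rw [Complex.sub_re]
    linarith [le_abs_self (f (z + x)).re, neg_abs_le (f z).re]
  have hM' : ∀ᶠ M' in 𝓝[>] (2 * M), ‖f w - f z‖ ≤ 2 * M' * dist w z / (R - dist w z) := by
    filter_upwards [self_mem_nhdsWithin] with M' hM'
    simpa [dist_eq_norm] using Complex.borelCaratheodory_zero (by linarith [mem_Ioi.1 hM']) hdiff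
      (fun x hx => (hre x hx).trans (mem_Ioi.1 hM').le) hR hball (by simp)
  have hlim : Tendsto (fun M' => 2 * M' * dist w z / (R - dist w z)) (𝓝[>] (2 * M))
      (𝓝 (2 * (2 * M) * dist w z / (R - dist w z))) :=
    (Continuous.tendsto (by fun_prop) _).mono_left nhdsWithin_le_nhds
  refine (ge_of_tendsto hlim hM').trans_eq ?_
  ring

theorem enorm_sub_le_of_enorm_re_le {f : ℂ → ℂ} {z w : ℂ} {R : ℝ} {M : ℝ≥0∞}
    (hf : DifferentiableOn ℂ f (ball z R)) (hM : ∀ x ∈ ball z R, ‖(f x).re‖ₑ ≤ M) (hR : 0 < R)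
    (hw : dist w z ≤ R / 2) : ‖f w - f z‖ₑ ≤ 4 * M := by
  induction M with
  | top => simp
  | coe M =>
    have hM' : ∀ x ∈ ball z R, |(f x).re| ≤ M := fun x hx => by
      rw [← Real.norm_eq_abs]; exact enorm_le_coe.1 (hM x hx)
    have hle : ‖f w - f z‖ ≤ 4 * M := by
      refine (norm_sub_le_of_abs_re_le hf hM' (by rw [mem_ball]; linarith)).trans ?_
      exact div_le_of_le_mul₀ (by linarith) (by positivity)
        (mul_le_mul_of_nonneg_left (by linarith) (by positivity))
    rw [← ENNReal.coe_ofNat, ← ENNReal.coe_mul]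
    exact enorm_le_coe.2 (by exact_mod_cast hle)

theorem harmonicOnNhd_re {f : ℂ → ℂ} {s : Set ℂ} (hs : IsOpen s) (hf : DifferentiableOn ℂ f s) :
    HarmonicOnNhd (fun x => (f x).re) s :=
  fun _ hx => (hf.analyticAt (hs.mem_nhds hx)).harmonicAt_re

theorem exists_enorm_sub_rpow_le_mul_setLAverage_re {p : ℝ} (hp : 0 < p) :
    ∃ C : ℝ≥0, ∀ {f : ℂ → ℂ} {z w : ℂ} {d : ℝ}, 0 < d → DifferentiableOn ℂ f (ball z d) →
      dist w z ≤ d / 4 → ‖f w - f z‖ₑ ^ p ≤ C * ⨍⁻ x in ball z d, ‖(f x).re‖ₑ ^ p ∂volume := by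
  obtain ⟨A, hA⟩ := exists_enorm_rpow_le_mul_setLAverage_of_harmonicOnNhd (F := ℝ) hp
  refine ⟨4 ^ p * (A * 2 ^ 2), fun {f z w d} hd hf hw => ?_⟩
  set I := ⨍⁻ x in ball z d, ‖(f x).re‖ₑ ^ p ∂volume
  have hre : ∀ x ∈ ball z (d / 2), ‖(f x).re‖ₑ ≤ (A * 2 ^ 2 * I) ^ p⁻¹ := fun x hx => by
    have hsub : ball x (d / 2) ⊆ ball z d := ball_subset_ball' (by linarith [mem_ball.1 hx])
    have hgrow := setLAverage_ball_le_of_subset volume (half_pos hd) hsub fun x => ‖(f x).re‖ₑ ^ p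
    rw [div_div_cancel₀ hd.ne', ENNReal.ofReal_ofNat, Complex.finrank_real_complex] at hgrow
    rw [ENNReal.le_rpow_inv_iff hp, mul_assoc]
    exact (hA (half_pos hd) ((harmonicOnNhd_re isOpen_ball hf).mono hsub)).trans (by gcongr)
  calc ‖f w - f z‖ₑ ^ p ≤ (4 * (A * 2 ^ 2 * I) ^ p⁻¹) ^ p := by
        gcongr
        exact enorm_sub_le_of_enorm_re_le (hf.mono (ball_subset_ball (half_le_self hd.le))) hre
          (half_pos hd) (by linarith)
    _ = (4 ^ p * (A * 2 ^ 2) : ℝ≥0) * I := by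
        rw [ENNReal.mul_rpow_of_nonneg _ _ hp.le, ENNReal.rpow_inv_rpow hp.ne']
        push_cast [ENNReal.coe_rpow_of_nonneg _ hp.le]
        ring

theorem exists_enorm_rpow_le_mul_setLAverage_re {p : ℝ} (hp : 0 < p) :
    ∃ C : ℝ≥0, ∀ {f : ℂ → ℂ} {z w : ℂ} {d : ℝ}, 0 < d → DifferentiableOn ℂ f (ball z d) →
      (f z).im = 0 → dist w z ≤ d / 4 →
      ‖f w‖ₑ ^ p ≤ C * ⨍⁻ x in ball z d, ‖(f x).re‖ₑ ^ p ∂volume := by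
  obtain ⟨A, hA⟩ := exists_enorm_rpow_le_mul_setLAverage_of_harmonicOnNhd (F := ℝ) hp
  obtain ⟨B, hB⟩ := exists_enorm_sub_rpow_le_mul_setLAverage_re hp
  refine ⟨2 ^ p * (A + B), fun {f z w d} hd hf him hw => ?_⟩
  have hz : ‖f z‖ₑ = ‖(f z).re‖ₑ := by
    rw [← ofReal_norm, ← ofReal_norm, Real.norm_eq_abs, Complex.abs_re_eq_norm.2 him]
  set I := ⨍⁻ x in ball z d, ‖(f x).re‖ₑ ^ p ∂volume
  calc ‖f w‖ₑ ^ p = ‖f z + (f w - f z)‖ₑ ^ p := by rw [add_sub_cancel]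
    _ ≤ (‖f z‖ₑ + ‖f w - f z‖ₑ) ^ p := by gcongr; exact enorm_add_le _ _
    _ ≤ 2 ^ p * (‖f z‖ₑ ^ p + ‖f w - f z‖ₑ ^ p) := by
      simpa [one_add_one_eq_two, mul_add] using
        add_rpow_le_mul_rpow_add_mul_rpow hp.le one_ne_zero ‖f z‖ₑ ‖f w - f z‖ₑ
    _ ≤ 2 ^ p * (A * I + B * I) := by
      rw [hz]
      gcongr
      · exact hA (u := fun x => (f x).re) hd (harmonicOnNhd_re isOpen_ball hf)
      · exact hB hd hf hw
    _ = (2 ^ p * (A + B) : ℝ≥0) * I := by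
      push_cast [ENNReal.coe_rpow_of_nonneg _ hp.le]
      ring

/-! ### Averages over Whitney balls -/

theorem setLAverage_mul_le {α : Type*} [MeasurableSpace α] {ν : Measure α} {s : Set α}
    (hs : MeasurableSet s) {U W : α → ℝ≥0∞} {c : ℝ≥0∞} {K : ℝ≥0} (h : ∀ x ∈ s, c ≤ K * W x) :
    (⨍⁻ x in s, U x ∂ν) * c ≤ K * ⨍⁻ x in s, U x * W x ∂ν := by
  rw [setLAverage_eq, setLAverage_eq, ← ENNReal.mul_div_right_comm, ← mul_div_assoc]
  refine ENNReal.div_le_div_right ?_ _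
  calc (∫⁻ x in s, U x ∂ν) * c ≤ ∫⁻ x in s, U x * c ∂ν := lintegral_mul_const_le _ _
    _ ≤ ∫⁻ x in s, K * (U x * W x) ∂ν := setLIntegral_mono' hs fun x hx => by
      rw [mul_left_comm]; gcongr; exact h x hx
    _ = K * ∫⁻ x in s, U x * W x ∂ν := lintegral_const_mul' _ _ ENNReal.coe_ne_top

theorem abs_norm_sub_norm_le_of_mem_whitneyBall {E : Type*} [SeminormedAddCommGroup E] {η : ℝ}
    {x z : E} (hx : x ∈ ball z (η * (1 - ‖z‖))) : |‖z‖ - ‖x‖| ≤ η * (1 - ‖z‖) :=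
  (abs_norm_sub_norm_le z x).trans (by rw [← dist_eq_norm]; exact (mem_ball'.1 hx).le)

theorem one_sub_norm_le_of_mem_whitneyBall {E : Type*} [SeminormedAddCommGroup E] {η : ℝ}
    (hη : 0 < η) (hη' : η ≤ 1 / 2) {x z : E} (hx : x ∈ ball z (η * (1 - ‖z‖))) :
    ‖x‖ < 1 ∧ 1 - ‖x‖ ≤ 2 * (1 - ‖z‖) ∧ 1 - ‖z‖ ≤ 2 * (1 - ‖x‖) := by
  have hz : 0 < 1 - ‖z‖ := pos_of_mul_pos_right (pos_of_mem_ball hx) hη.le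
  obtain ⟨h₁, h₂⟩ := abs_le.1 (abs_norm_sub_norm_le_of_mem_whitneyBall hx)
  have hη_mul : η * (1 - ‖z‖) ≤ 1 / 2 * (1 - ‖z‖) := by gcongr
  exact ⟨by linarith, by linarith, by linarith⟩

section

variable {X : Type*} [PseudoMetricSpace X] [SecondCountableTopology X] [MeasurableSpace X]
  [OpensMeasurableSpace X] (μ : Measure X) [SFinite μ] {ρ : X → ℝ}

theorem measurable_setLIntegral_ball (hρ : Measurable ρ) {U : X → ℝ≥0∞}
    (hU : Measurable U) : Measurable fun z => ∫⁻ x in ball z (ρ z), U x ∂μ := by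
  have hset : MeasurableSet {q : X × X | dist q.2 q.1 < ρ q.1} :=
    measurableSet_lt (by fun_prop) (by fun_prop)
  have h := ((hU.comp measurable_snd).indicator hset).lintegral_prod_right' (ν := μ)
  convert h using 2 with z
  rw [← lintegral_indicator measurableSet_ball]
  rfl

theorem measurable_measure_ball (hρ : Measurable ρ) :
    Measurable fun z => μ (ball z (ρ z)) := by
  simpa only [setLIntegral_one] using
    measurable_setLIntegral_ball μ hρ (measurable_const (a := (1 : ℝ≥0∞)))

end

section

variable {E : Type*} [NormedAddCommGroup E] [MeasurableSpace E] (μ : Measure E)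

/-- The average of `U` over the Whitney ball of the open unit ball with centre `z` and parameter
`η`, that is, the ball whose radius is `η` times the distance from `z` to the unit sphere. -/
noncomputable def whitneyAvg (η : ℝ) (U : E → ℝ≥0∞) (z : E) : ℝ≥0∞ :=
  ⨍⁻ x in ball z (η * (1 - ‖z‖)), U x ∂μ

variable [BorelSpace E] [μ.IsAddHaarMeasure]

theorem whitneyAvg_le_lintegral_indicator {η : ℝ} (hη : 0 < η) (hη' : η ≤ 1 / 2) {U : E → ℝ≥0∞}
    (hU : Measurable U) (z : E) :
    whitneyAvg μ η U z ≤ ∫⁻ x in ball 0 1, (ball x (2 * (η * (1 - ‖x‖)))).indicator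
      (fun _ => U x / μ (ball x (η * (1 - ‖x‖) / 2))) z ∂μ := by
  rw [whitneyAvg, setLAverage_eq, div_eq_mul_inv, ← lintegral_mul_const _ hU]
  refine (setLIntegral_mono' measurableSet_ball fun x hx => ?_).trans (lintegral_mono_set
    fun x hx => mem_ball_zero_iff.2 (one_sub_norm_le_of_mem_whitneyBall hη hη' hx).1)
  obtain ⟨-, hxz, hzx⟩ := one_sub_norm_le_of_mem_whitneyBall hη hη' hx
  rw [← div_eq_mul_inv, indicator_of_mem (mem_ball'.2 ((mem_ball.1 hx).trans_le
    (by rw [mul_left_comm]; gcongr)))]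
  refine ENNReal.div_le_div_left ?_ _
  rw [Measure.addHaar_ball_center, Measure.addHaar_ball_center μ z]
  exact measure_mono (ball_subset_ball (by linarith [mul_le_mul_of_nonneg_left hxz hη.le]))

variable [NormedSpace ℝ E] [FiniteDimensional ℝ E]

theorem measurable_whitneyAvg (η : ℝ) {U : E → ℝ≥0∞} (hU : Measurable U) :
    Measurable (whitneyAvg μ η U) := by
  have hρ : Measurable fun z : E => η * (1 - ‖z‖) := by fun_prop
  unfold whitneyAvg
  simp only [setLAverage_eq]
  exact (measurable_setLIntegral_ball μ hρ hU).div (measurable_measure_ball μ hρ)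

theorem lintegral_whitneyAvg_le {η : ℝ} (hη : 0 < η) (hη' : η ≤ 1 / 2) {U : E → ℝ≥0∞}
    (hU : Measurable U) :
    ∫⁻ z in ball (0 : E) 1, whitneyAvg μ η U z ∂μ ≤
      4 ^ finrank ℝ E * ∫⁻ x in ball (0 : E) 1, U x ∂μ := by
  set ρ : E → ℝ := fun x => η * (1 - ‖x‖)
  set kernel : E → E → ℝ≥0∞ := fun z x =>
    (ball x (2 * ρ x)).indicator (fun _ => U x / μ (ball x (ρ x / 2))) z
  have hkernel : Measurable (Function.uncurry kernel) := by
    have hdensity : Measurable fun x => U x / μ (ball x (ρ x / 2)) :=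
      hU.div (measurable_measure_ball μ (by fun_prop))
    have hset : MeasurableSet {q : E × E | dist q.1 q.2 < 2 * ρ q.2} :=
      measurableSet_lt (by fun_prop) (by fun_prop)
    exact (hdensity.comp measurable_snd).indicator hset
  have hslice : ∀ x ∈ ball (0 : E) 1,
      ∫⁻ z in ball 0 1, kernel z x ∂μ ≤ 4 ^ finrank ℝ E * U x := fun x hx => by
    have hρ : 0 < ρ x := mul_pos hη (sub_pos.2 (mem_ball_zero_iff.1 hx))
    have hball : μ (ball x (2 * ρ x)) = 4 ^ finrank ℝ E * μ (ball x (ρ x / 2)) := by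
      rw [addHaar_ball_eq_pow_mul_addHaar_ball μ x x (half_pos hρ) (by positivity),
        show 2 * ρ x / (ρ x / 2) = 4 by field_simp; norm_num, ENNReal.ofReal_ofNat]
    refine (setLIntegral_le_lintegral _ _).trans_eq ?_
    rw [lintegral_indicator_const measurableSet_ball, hball, mul_left_comm,
      ENNReal.div_mul_cancel (measure_ball_pos μ x (half_pos hρ)).ne' measure_ball_lt_top.ne]
  calc ∫⁻ z in ball (0 : E) 1, whitneyAvg μ η U z ∂μ
      ≤ ∫⁻ z in ball 0 1, ∫⁻ x in ball 0 1, kernel z x ∂μ ∂μ :=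
        lintegral_mono (whitneyAvg_le_lintegral_indicator μ hη hη' hU)
    _ = ∫⁻ x in ball 0 1, ∫⁻ z in ball 0 1, kernel z x ∂μ ∂μ :=
        lintegral_lintegral_swap hkernel.aemeasurable
    _ ≤ ∫⁻ x in ball 0 1, 4 ^ finrank ℝ E * U x ∂μ := setLIntegral_mono' measurableSet_ball hslice
    _ = 4 ^ finrank ℝ E * ∫⁻ x in ball 0 1, U x ∂μ := lintegral_const_mul _ hU

theorem lintegral_whitneyAvg_mul_le {η : ℝ} (hη : 0 < η) (hη' : η ≤ 1 / 2) {U W : E → ℝ≥0∞}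
    (hU : Measurable U) (hW : Measurable W) {K : ℝ≥0}
    (hK : ∀ z, ∀ x ∈ ball z (η * (1 - ‖z‖)), W z ≤ K * W x) :
    ∫⁻ z in ball (0 : E) 1, whitneyAvg μ η U z * W z ∂μ ≤
      K * (4 ^ finrank ℝ E * ∫⁻ x in ball (0 : E) 1, U x * W x ∂μ) :=
  calc _ ≤ ∫⁻ z in ball (0 : E) 1, K * whitneyAvg μ η (fun x => U x * W x) z ∂μ :=
        lintegral_mono fun z => setLAverage_mul_le measurableSet_ball (hK z)
    _ = K * ∫⁻ z in ball (0 : E) 1, whitneyAvg μ η (fun x => U x * W x) z ∂μ :=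
        lintegral_const_mul' _ _ ENNReal.coe_ne_top
    _ ≤ _ := by gcongr; exact lintegral_whitneyAvg_le μ hη hη' (hU.mul hW)

end

/-! ### Absorption along radii -/

section

variable {κ : ℝ} {q : ℝ≥0} {V g : ℝ → ℝ≥0∞}

theorem setLIntegral_comp_mul_sub_mul_le (hκ : 0 < κ)
    (hV : ∀ s ∈ Ico (0 : ℝ) 1, V ((s + κ) / (1 + κ)) ≤ ENNReal.ofReal (1 + κ) * q * V s) {R : ℝ}
    (hR : R ≤ 1) :
    ∫⁻ r in Ico (κ / (1 + κ)) R, g ((1 + κ) * r - κ) * V r ≤ q * ∫⁻ s in Ico 0 R, g s * V s := by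
  have hκ' : 0 < 1 + κ := by positivity
  have hinv : ∀ r, ((1 + κ) * r - κ + κ) / (1 + κ) = r := fun r => by field_simp; ring
  have himage : (fun r => (1 + κ) * r - κ) '' Ico (κ / (1 + κ)) R ⊆ Ico 0 R := by
    rintro _ ⟨r, ⟨hr, hrR⟩, rfl⟩
    rw [div_le_iff₀' hκ'] at hr
    exact ⟨by linarith, by nlinarith⟩
  have hchange := lintegral_image_eq_lintegral_abs_deriv_mul (s := Ico (κ / (1 + κ)) R)
    (f := fun r => (1 + κ) * r - κ) (f' := fun _ => 1 + κ) measurableSet_Ico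
    (fun x _ => by simpa using (((hasDerivAt_id x).const_mul (1 + κ)).sub_const κ).hasDerivWithinAt)
    (fun x _ y _ hxy => mul_left_cancel₀ hκ'.ne' (sub_left_injective hxy))
    (fun s => g s * V ((s + κ) / (1 + κ)))
  simp only [hinv, abs_of_pos hκ'] at hchange
  rw [lintegral_const_mul' _ _ ENNReal.ofReal_ne_top] at hchange
  refine (ENNReal.mul_le_mul_iff_right (ENNReal.ofReal_pos.2 hκ').ne' ENNReal.ofReal_ne_top).1 ?_
  calc _ = ∫⁻ s in (fun r => (1 + κ) * r - κ) '' Ico (κ / (1 + κ)) R,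
          g s * V ((s + κ) / (1 + κ)) := hchange.symm
    _ ≤ ∫⁻ s in Ico 0 R, g s * V ((s + κ) / (1 + κ)) := lintegral_mono_set himage
    _ ≤ ∫⁻ s in Ico 0 R, ENNReal.ofReal (1 + κ) * q * (g s * V s) :=
      setLIntegral_mono' measurableSet_Ico fun s hs => by
        rw [mul_left_comm]
        exact mul_le_mul_right (hV s ⟨hs.1, hs.2.trans_le hR⟩) _
    _ = ENNReal.ofReal (1 + κ) * (q * ∫⁻ s in Ico 0 R, g s * V s) := by
      rw [lintegral_const_mul' _ _ (by finiteness), mul_assoc]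

theorem setLIntegral_mul_le_of_le_comp_add (hκ : 0 < κ) (hVm : Measurable V) (hg : Measurable g)
    (hV : ∀ s ∈ Ico (0 : ℝ) 1, V ((s + κ) / (1 + κ)) ≤ ENNReal.ofReal (1 + κ) * q * V s)
    {α : ℝ≥0} (hαq : α * q < 1) {h : ℝ → ℝ≥0∞}
    (hstep : ∀ r ∈ Ico (κ / (1 + κ)) 1, g r ≤ α * g ((1 + κ) * r - κ) + h r)
    (hfin : ∀ R < 1, ∫⁻ r in Ico 0 R, g r * V r ≠ ⊤) :
    ∫⁻ r in Ico (0 : ℝ) 1, g r * V r ≤ ((1 - α * q)⁻¹ : ℝ≥0) *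
      ((∫⁻ r in Ico 0 (κ / (1 + κ)), g r * V r) + ∫⁻ r in Ico (κ / (1 + κ)) 1, h r * V r) := by
  set r₀ := κ / (1 + κ)
  have houter : ∀ R < 1, ∫⁻ r in Ico r₀ R, g r * V r ≤
      α * q * (∫⁻ r in Ico 0 R, g r * V r) + ∫⁻ r in Ico r₀ 1, h r * V r := fun R hR =>
    calc ∫⁻ r in Ico r₀ R, g r * V r
        ≤ ∫⁻ r in Ico r₀ R, (α * (g ((1 + κ) * r - κ) * V r) + h r * V r) :=
          setLIntegral_mono' measurableSet_Ico fun r hr => by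
            rw [← mul_assoc, ← add_mul]
            exact mul_le_mul_left (hstep r ⟨hr.1, hr.2.trans hR⟩) _
      _ = α * (∫⁻ r in Ico r₀ R, g ((1 + κ) * r - κ) * V r) + ∫⁻ r in Ico r₀ R, h r * V r := by
          rw [lintegral_add_left (by fun_prop), lintegral_const_mul' _ _ ENNReal.coe_ne_top]
      _ ≤ _ := by
          rw [mul_assoc]
          gcongr
          exact setLIntegral_comp_mul_sub_mul_le hκ hV hR.le
  refine setLIntegral_Ico_le_of_forall_lt fun R hR => ?_
  refine le_inv_one_sub_mul_of_le_add_mul (hfin R hR) hαq ?_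
  calc ∫⁻ r in Ico 0 R, g r * V r
      ≤ (∫⁻ r in Ico 0 r₀, g r * V r) + ∫⁻ r in Ico r₀ R, g r * V r :=
        (lintegral_mono_set Ico_subset_Ico_union_Ico).trans (lintegral_union_le _ _ _)
    _ ≤ (∫⁻ r in Ico 0 r₀, g r * V r) + (α * q * (∫⁻ r in Ico 0 R, g r * V r) +
          ∫⁻ r in Ico r₀ 1, h r * V r) := by gcongr; exact houter R hR
    _ = _ := by push_cast; ring

end

theorem exists_one_add_rpow_mul_lt_one (p : ℝ) {q : ℝ≥0} (hq : q < 1) :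
    ∃ δ : ℝ≥0, δ ≠ 0 ∧ (1 + δ) ^ p * q < 1 := by
  have hcont : ContinuousAt (fun δ : ℝ≥0 => (1 + δ) ^ p * q) 0 :=
    (ContinuousAt.comp (f := fun δ : ℝ≥0 => 1 + δ) (NNReal.continuousAt_rpow_const
      (Or.inl (by simp))) (by fun_prop)).mul_const _
  have hlt : ∀ᶠ δ in 𝓝[>] (0 : ℝ≥0), (1 + δ) ^ p * q < 1 :=
    (hcont.eventually_lt_const (by simpa using hq)).filter_mono nhdsWithin_le_nhds
  obtain ⟨δ, hδ, hpos⟩ := (hlt.and self_mem_nhdsWithin).exists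
  exact ⟨δ, (show 0 < δ from hpos).ne', hδ⟩

theorem exists_enorm_rpow_le_add_whitneyAvg {p : ℝ} (hp : 0 < p) {η : ℝ} (hη : 0 < η)
    (hη' : η ≤ 1 / 2) {δ : ℝ≥0} (hδ : δ ≠ 0) :
    ∃ D : ℝ≥0, ∀ {f : ℂ → ℂ} {z w : ℂ}, DifferentiableOn ℂ f (ball 0 1) → ‖z‖ < 1 →
      dist w z ≤ η / 4 * (1 - ‖z‖) →
      ‖f z‖ₑ ^ p ≤ ((1 + δ) ^ p : ℝ≥0) * ‖f w‖ₑ ^ p +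
        D * whitneyAvg volume η (fun x => ‖(f x).re‖ₑ ^ p) z := by
  obtain ⟨A, hA⟩ := exists_enorm_sub_rpow_le_mul_setLAverage_re hp
  refine ⟨(1 + δ⁻¹) ^ p * A, fun {f z w} hf hz hw => ?_⟩
  have hsub : ball z (η * (1 - ‖z‖)) ⊆ ball 0 1 := fun x hx =>
    mem_ball_zero_iff.2 (one_sub_norm_le_of_mem_whitneyBall hη hη' hx).1
  calc ‖f z‖ₑ ^ p ≤ (‖f w‖ₑ + ‖f w - f z‖ₑ) ^ p := by
        gcongr
        simpa using enorm_sub_le (a := f w) (b := f w - f z)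
    _ ≤ (1 + δ : ℝ≥0) ^ p * ‖f w‖ₑ ^ p + (1 + δ⁻¹ : ℝ≥0) ^ p * ‖f w - f z‖ₑ ^ p :=
      add_rpow_le_mul_rpow_add_mul_rpow hp.le hδ _ _
    _ ≤ (1 + δ : ℝ≥0) ^ p * ‖f w‖ₑ ^ p + (1 + δ⁻¹ : ℝ≥0) ^ p *
          (A * whitneyAvg volume η (fun x => ‖(f x).re‖ₑ ^ p) z) := by
      gcongr
      exact hA (mul_pos hη (sub_pos.2 hz)) (hf.mono hsub) (by linarith)
    _ = _ := by
      rw [ENNReal.coe_mul, mul_assoc, ENNReal.coe_rpow_of_nonneg _ hp.le,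
        ENNReal.coe_rpow_of_nonneg _ hp.le]

theorem exists_circleLIntegral_enorm_rpow_le_add_whitneyAvg {p : ℝ} (hp : 0 < p) {η : ℝ}
    (hη : 0 < η) (hη' : η ≤ 1 / 2) {δ : ℝ≥0} (hδ : δ ≠ 0) :
    ∃ D : ℝ≥0, ∀ {f : ℂ → ℂ}, Measurable f → DifferentiableOn ℂ f (ball 0 1) → ∀ r ∈ Ico (0 : ℝ) 1,
      circleLIntegral (fun z => ‖f z‖ₑ ^ p) 0 r ≤
        ((1 + δ) ^ p : ℝ≥0) * circleLIntegral (fun z => ‖f z‖ₑ ^ p) 0 ((1 + η / 4) * r - η / 4) +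
        D * circleLIntegral (whitneyAvg volume η (fun z => ‖(f z).re‖ₑ ^ p)) 0 r := by
  obtain ⟨D, hD⟩ := exists_enorm_rpow_le_add_whitneyAvg hp hη hη' hδ
  refine ⟨D, fun {f} hfm hf r hr => ?_⟩
  have hmeas : Measurable fun θ => ‖f (circleMap 0 ((1 + η / 4) * r - η / 4) θ)‖ₑ ^ p :=
    (hfm.comp (continuous_circleMap _ _).measurable).enorm.pow_const p
  have hnorm : ∀ θ, ‖circleMap 0 r θ‖ = r := fun θ => by
    rw [norm_circleMap_zero, abs_of_nonneg hr.1]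
  have hdist : ∀ θ, dist (circleMap 0 ((1 + η / 4) * r - η / 4) θ) (circleMap 0 r θ) =
      η / 4 * (1 - r) := fun θ => by
    have hsub : circleMap 0 ((1 + η / 4) * r - η / 4) θ - circleMap 0 r θ =
        circleMap 0 (η / 4 * (r - 1)) θ := by
      simp only [circleMap]; push_cast; ring
    rw [dist_eq_norm, hsub, norm_circleMap_zero, abs_mul, abs_of_pos (by positivity), abs_sub_comm,
      abs_of_pos (sub_pos.2 hr.2)]
  unfold circleLIntegral
  rw [← lintegral_const_mul' _ _ ENNReal.coe_ne_top, ← lintegral_const_mul' _ _ ENNReal.coe_ne_top,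
    ← lintegral_add_left (hmeas.const_mul _)]
  exact lintegral_mono fun θ => hD hf (by rw [hnorm]; exact hr.2) (by rw [hnorm, hdist])

theorem setLIntegral_circleLIntegral_mul_le_of_le {F : ℂ → ℝ≥0∞} {V : ℝ → ℝ≥0∞} {R : ℝ}
    {M B : ℝ≥0∞} (hF : ∀ z ∈ ball 0 R, F z ≤ M) (hV : ∀ r ∈ Ico 0 R, V r ≤ B) :
    ∫⁻ r in Ico 0 R, circleLIntegral F 0 r * V r ≤
      M * ENNReal.ofReal (2 * π) * B * ENNReal.ofReal R := by
  have hcircle : ∀ r ∈ Ico 0 R, circleLIntegral F 0 r ≤ M * ENNReal.ofReal (2 * π) := fun r hr =>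
    calc circleLIntegral F 0 r ≤ circleLIntegral (fun _ => M) 0 r :=
          circleLIntegral_mono fun z hz => hF z <| by
            rw [mem_ball, mem_sphere.1 hz, abs_of_nonneg hr.1]; exact hr.2
      _ = M * ENNReal.ofReal (2 * π) := by
          rw [circleLIntegral, setLIntegral_const, Real.volume_Ioo, sub_neg_eq_add, two_mul]
  refine (setLIntegral_mono' measurableSet_Ico fun r hr =>
    mul_le_mul' (hcircle r hr) (hV r hr)).trans_eq ?_
  rw [setLIntegral_const, Real.volume_Ico, sub_zero]

/-- A weight `V` of `‖z‖` on the unit disc for which absorption along radii works with Whitney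
discs of parameter `η`: it is bounded on smaller concentric discs, its value at the centre of a
Whitney disc is at most a multiple of its values on that disc, and the substitution
`r = (s + κ) / (1 + κ)`, `κ = η / 4`, turns `V r dr` into at most `q V s ds` for some `q < 1`. -/
structure IsWhitneyWeight (η : ℝ) (V : ℝ → ℝ≥0∞) : Prop where
  pos : 0 < η
  le_half : η ≤ 1 / 2
  measurable : Measurable V
  zero_ne_zero : V 0 ≠ 0
  bounded : ∀ R < 1, ∃ B : ℝ≥0, ∀ r ∈ Ico 0 R, V r ≤ B
  almost_constant : ∃ K : ℝ≥0, ∀ r ∈ Ico (0 : ℝ) 1, ∀ t ∈ Ico (0 : ℝ) 1,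
    |r - t| ≤ η * (1 - r) → V r ≤ K * V t
  contraction : ∃ q : ℝ≥0, q < 1 ∧ ∀ s ∈ Ico (0 : ℝ) 1,
    V ((s + η / 4) / (1 + η / 4)) ≤ ENNReal.ofReal (1 + η / 4) * q * V s

namespace IsWhitneyWeight

variable {η : ℝ} {V : ℝ → ℝ≥0∞}

theorem exists_le_mul_of_mem_whitneyBall {E : Type*} [SeminormedAddCommGroup E]
    (hV : IsWhitneyWeight η V) :
    ∃ K : ℝ≥0, ∀ z : E, ∀ x ∈ ball z (η * (1 - ‖z‖)), V ‖z‖ ≤ K * V ‖x‖ := by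
  obtain ⟨K, hK⟩ := hV.almost_constant
  refine ⟨K, fun z x hx => ?_⟩
  obtain ⟨hx₁, hxz, -⟩ := one_sub_norm_le_of_mem_whitneyBall hV.pos hV.le_half hx
  exact hK _ ⟨norm_nonneg z, by linarith⟩ _ ⟨norm_nonneg x, hx₁⟩
    (abs_norm_sub_norm_le_of_mem_whitneyBall hx)

theorem exists_whitneyAvg_zero_le (hV : IsWhitneyWeight η V) :
    ∃ C : ℝ≥0, ∀ U : ℂ → ℝ≥0∞,
      whitneyAvg volume η U 0 ≤ C * ∫⁻ z in ball (0 : ℂ) 1, U z * V ‖z‖ := by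
  obtain ⟨K, hK⟩ := hV.exists_le_mul_of_mem_whitneyBall (E := ℂ)
  obtain ⟨B, hB⟩ := hV.bounded (1 / 2) (by norm_num)
  have hV₀ : V 0 ≠ ⊤ := ne_top_of_le_ne_top ENNReal.coe_ne_top (hB 0 (by norm_num))
  have hball : volume (ball (0 : ℂ) η) ≠ 0 := (measure_ball_pos _ _ hV.pos).ne'
  have hC : K * (volume (ball (0 : ℂ) η))⁻¹ * (V 0)⁻¹ ≠ ⊤ := by
    have := ENNReal.inv_ne_top.2 hball
    have := ENNReal.inv_ne_top.2 hV.zero_ne_zero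
    finiteness
  refine ⟨(K * (volume (ball (0 : ℂ) η))⁻¹ * (V 0)⁻¹).toNNReal, fun U => ?_⟩
  have havg := setLAverage_mul_le (ν := volume) (U := U) (W := fun x => V ‖x‖) measurableSet_ball
    (hK 0)
  simp only [norm_zero, sub_zero, mul_one] at havg
  rw [ENNReal.coe_toNNReal hC, whitneyAvg, norm_zero, sub_zero, mul_one,
    ← ENNReal.mul_le_mul_iff_left hV.zero_ne_zero hV₀]
  calc _ ≤ K * ⨍⁻ x in ball (0 : ℂ) η, U x * V ‖x‖ ∂volume := havg
    _ ≤ K * ((volume (ball (0 : ℂ) η))⁻¹ * ∫⁻ z in ball (0 : ℂ) 1, U z * V ‖z‖) := by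
      rw [setLAverage_eq, ENNReal.div_eq_inv_mul]
      gcongr
      linarith [hV.le_half]
    _ = _ := by
      rw [mul_right_comm, mul_assoc _ _ (V 0),
        ENNReal.inv_mul_cancel hV.zero_ne_zero hV₀, mul_one, mul_assoc]

theorem exists_setLIntegral_circleLIntegral_near_zero_le (hV : IsWhitneyWeight η V) {p : ℝ}
    (hp : 0 < p) :
    ∃ C : ℝ≥0, ∀ {f : ℂ → ℂ}, DifferentiableOn ℂ f (ball 0 1) → (f 0).im = 0 →
      ∫⁻ r in Ico 0 (η / 4 / (1 + η / 4)), circleLIntegral (fun z => ‖f z‖ₑ ^ p) 0 r * V r ≤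
        C * ∫⁻ z in ball (0 : ℂ) 1, ‖(f z).re‖ₑ ^ p * V ‖z‖ := by
  have hη := hV.pos
  have hr₀ : η / 4 / (1 + η / 4) ≤ η / 4 := div_le_self (by positivity) (by linarith)
  obtain ⟨A, hA⟩ := exists_enorm_rpow_le_mul_setLAverage_re hp
  obtain ⟨D, hD⟩ := hV.exists_whitneyAvg_zero_le
  obtain ⟨B, hB⟩ := hV.bounded _ (hr₀.trans_lt (by linarith [hV.le_half]))
  refine ⟨A * D * (2 * π).toNNReal * B * (η / 4 / (1 + η / 4)).toNNReal, fun {f} hf him => ?_⟩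
  have hbound : ∀ z ∈ ball (0 : ℂ) (η / 4 / (1 + η / 4)), ‖f z‖ₑ ^ p ≤
      A * (D * ∫⁻ z in ball (0 : ℂ) 1, ‖(f z).re‖ₑ ^ p * V ‖z‖) := fun z hz => by
    refine (hA hη (hf.mono (ball_subset_ball (by linarith [hV.le_half]))) him
      ((mem_ball.1 hz).le.trans hr₀)).trans (mul_le_mul_right ?_ _)
    simpa [whitneyAvg] using hD fun x => ‖(f x).re‖ₑ ^ p
  refine (setLIntegral_circleLIntegral_mul_le_of_le hbound hB).trans_eq ?_
  push_cast
  unfold ENNReal.ofReal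
  ring

theorem setLIntegral_circleLIntegral_enorm_rpow_mul_ne_top (hV : IsWhitneyWeight η V) {p : ℝ}
    (hp : 0 ≤ p) {f : ℂ → ℂ} (hf : ContinuousOn f (ball 0 1)) {R : ℝ} (hR : R < 1) :
    ∫⁻ r in Ico 0 R, circleLIntegral (fun z => ‖f z‖ₑ ^ p) 0 r * V r ≠ ⊤ := by
  obtain ⟨B, hB⟩ := hV.bounded R hR
  obtain ⟨M, hM⟩ := (isCompact_closedBall (0 : ℂ) R).exists_bound_of_continuousOn
    (hf.mono (closedBall_subset_ball hR))
  have hbound : ∀ z ∈ ball (0 : ℂ) R, ‖f z‖ₑ ^ p ≤ ENNReal.ofReal M ^ p := fun z hz => by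
    gcongr
    rw [← ofReal_norm]
    exact ENNReal.ofReal_le_ofReal (hM z (ball_subset_closedBall hz))
  exact ne_top_of_le_ne_top (by finiteness) (setLIntegral_circleLIntegral_mul_le_of_le hbound hB)

theorem exists_setLIntegral_circleLIntegral_whitneyAvg_le (hV : IsWhitneyWeight η V) {r₀ : ℝ}
    (hr₀ : 0 < r₀) :
    ∃ C : ℝ≥0, ∀ {U : ℂ → ℝ≥0∞}, Measurable U →
      ∫⁻ r in Ico r₀ 1, circleLIntegral (whitneyAvg volume η U) 0 r * V r ≤
        C * ∫⁻ z in ball (0 : ℂ) 1, U z * V ‖z‖ := by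
  obtain ⟨K, hK⟩ := hV.exists_le_mul_of_mem_whitneyBall (E := ℂ)
  refine ⟨r₀⁻¹.toNNReal * (K * 4 ^ 2), fun {U} hU => ?_⟩
  calc _ ≤ ENNReal.ofReal r₀⁻¹ * ∫⁻ z in ball (0 : ℂ) 1, whitneyAvg volume η U z * V ‖z‖ :=
        setLIntegral_circleLIntegral_mul_le (measurable_whitneyAvg _ _ hU) hV.measurable hr₀
    _ ≤ ENNReal.ofReal r₀⁻¹ * (K * (4 ^ 2 * ∫⁻ z in ball (0 : ℂ) 1, U z * V ‖z‖)) := by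
        gcongr
        simpa only [Complex.finrank_real_complex] using lintegral_whitneyAvg_mul_le volume
          (W := fun z => V ‖z‖) hV.pos hV.le_half hU (hV.measurable.comp measurable_norm) hK
    _ = _ := by
        push_cast
        unfold ENNReal.ofReal
        ring

theorem exists_setLIntegral_circleLIntegral_le_of_measurable (hV : IsWhitneyWeight η V) {p : ℝ}
    (hp : 0 < p) :
    ∃ C : ℝ≥0, ∀ {f : ℂ → ℂ}, Measurable f → DifferentiableOn ℂ f (ball 0 1) → (f 0).im = 0 →
      ∫⁻ r in Ico (0 : ℝ) 1, circleLIntegral (fun z => ‖f z‖ₑ ^ p) 0 r * V r ≤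
        C * ∫⁻ z in ball (0 : ℂ) 1, ‖(f z).re‖ₑ ^ p * V ‖z‖ := by
  have hη := hV.pos
  obtain ⟨q, hq, hcontr⟩ := hV.contraction
  obtain ⟨δ, hδ, hδq⟩ := exists_one_add_rpow_mul_lt_one p hq
  obtain ⟨A, hA⟩ := hV.exists_setLIntegral_circleLIntegral_near_zero_le hp
  obtain ⟨D, hD⟩ :=
    exists_circleLIntegral_enorm_rpow_le_add_whitneyAvg hp hη hV.le_half hδ
  obtain ⟨B, hB⟩ := hV.exists_setLIntegral_circleLIntegral_whitneyAvg_le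
    (r₀ := η / 4 / (1 + η / 4)) (by positivity)
  refine ⟨(1 - (1 + δ) ^ p * q)⁻¹ * (A + D * B), fun {f} hfm hf him => ?_⟩
  set Y := ∫⁻ z in ball (0 : ℂ) 1, ‖(f z).re‖ₑ ^ p * V ‖z‖
  set h : ℝ → ℝ≥0∞ := circleLIntegral (whitneyAvg volume η fun z => ‖(f z).re‖ₑ ^ p) 0
  have hG : Measurable (circleLIntegral (fun z => ‖f z‖ₑ ^ p) 0) :=
    measurable_circleLIntegral (hfm.enorm.pow_const p) 0
  have hU : Measurable fun z => ‖(f z).re‖ₑ ^ p :=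
    (Complex.measurable_re.comp hfm).enorm.pow_const p
  calc _ ≤ ((1 - (1 + δ) ^ p * q)⁻¹ : ℝ≥0) *
        ((∫⁻ r in Ico 0 (η / 4 / (1 + η / 4)), circleLIntegral (fun z => ‖f z‖ₑ ^ p) 0 r * V r) +
          ∫⁻ r in Ico (η / 4 / (1 + η / 4)) 1, D * h r * V r) :=
        setLIntegral_mul_le_of_le_comp_add (by positivity) hV.measurable hG hcontr hδq
          (fun r hr => hD hfm hf r (Ico_subset_Ico_left (by positivity) hr))
          (fun R hR =>
            hV.setLIntegral_circleLIntegral_enorm_rpow_mul_ne_top hp.le hf.continuousOn hR)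
    _ ≤ ((1 - (1 + δ) ^ p * q)⁻¹ : ℝ≥0) * (A * Y + D * (B * Y)) := by
        simp only [mul_assoc (D : ℝ≥0∞)]
        rw [lintegral_const_mul' _ _ ENNReal.coe_ne_top]
        gcongr
        · exact hA hf him
        · exact hB hU
    _ = _ := by push_cast; ring

theorem exists_setLIntegral_enorm_rpow_mul_le (hV : IsWhitneyWeight η V) {p : ℝ} (hp : 0 < p) :
    ∃ C : ℝ≥0, ∀ {f : ℂ → ℂ}, DifferentiableOn ℂ f (ball 0 1) → (f 0).im = 0 →
      ∫⁻ z in ball (0 : ℂ) 1, ‖f z‖ₑ ^ p * V ‖z‖ ≤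
        C * ∫⁻ z in ball (0 : ℂ) 1, ‖(f z).re‖ₑ ^ p * V ‖z‖ := by
  obtain ⟨C, hC⟩ := hV.exists_setLIntegral_circleLIntegral_le_of_measurable hp
  refine ⟨C, fun {f} hf him => ?_⟩
  set g := (ball (0 : ℂ) 1).indicator f
  have hgm : Measurable g := measurable_indicator_of_continuousOn hf.continuousOn measurableSet_ball
  have hgf : EqOn g f (ball 0 1) := eqOn_indicator
  calc ∫⁻ z in ball (0 : ℂ) 1, ‖f z‖ₑ ^ p * V ‖z‖ = ∫⁻ z in ball (0 : ℂ) 1, ‖g z‖ₑ ^ p * V ‖z‖ :=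
        setLIntegral_congr_fun measurableSet_ball fun z hz => by simp only [hgf hz]
    _ ≤ ∫⁻ r in Ico (0 : ℝ) 1, circleLIntegral (fun z => ‖g z‖ₑ ^ p) 0 r * V r :=
        setLIntegral_unitBall_mul_norm_le (hgm.enorm.pow_const p) hV.measurable
    _ ≤ C * ∫⁻ z in ball (0 : ℂ) 1, ‖(g z).re‖ₑ ^ p * V ‖z‖ :=
        hC hgm (hf.congr hgf) (by rwa [hgf (mem_ball_self one_pos)])
    _ = C * ∫⁻ z in ball (0 : ℂ) 1, ‖(f z).re‖ₑ ^ p * V ‖z‖ := by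
        congr 1
        exact setLIntegral_congr_fun measurableSet_ball fun z hz => by simp only [hgf hz]

end IsWhitneyWeight

/-! ### Regular radial weights -/

theorem map_norm_restrict_unitBall_absolutelyContinuous :
    Measure.map norm (volume.restrict (ball (0 : ℂ) 1)) ≪ volume.restrict (Ico (0 : ℝ) 1) := by
  refine Measure.AbsolutelyContinuous.mk fun s hs hnull => ?_
  have hind : s.indicator (1 : ℝ → ℝ≥0∞) =ᵐ[volume.restrict (Ico 0 1)] 0 :=
    indicator_ae_eq_zero.2 (measure_mono_null inter_subset_left hnull)
  rw [Measure.map_apply measurable_norm hs, ← lintegral_indicator_one (measurable_norm hs),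
    ← nonpos_iff_eq_zero]
  calc ∫⁻ z in ball (0 : ℂ) 1, (norm ⁻¹' s).indicator 1 z =
        ∫⁻ z in ball (0 : ℂ) 1, 1 * s.indicator 1 ‖z‖ := by simp only [one_mul]; rfl
    _ ≤ ∫⁻ r in Ico (0 : ℝ) 1, circleLIntegral (fun _ => 1) 0 r * s.indicator 1 r :=
        setLIntegral_unitBall_mul_norm_le measurable_const (measurable_one.indicator hs)
    _ = ∫⁻ _ in Ico (0 : ℝ) 1, 0 := lintegral_congr_ae <| hind.mono fun _ hr => by
        simp only [hr, Pi.zero_apply, mul_zero]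
    _ = 0 := lintegral_zero

theorem add_div_one_add_mem_Ico {κ s : ℝ} (hκ : 0 < κ) (hs : s ∈ Ico (0 : ℝ) 1) :
    (s + κ) / (1 + κ) ∈ Ico (0 : ℝ) 1 :=
  ⟨div_nonneg (by linarith [hs.1]) (by linarith),
    (div_lt_one (by linarith)).2 (by linarith [hs.2])⟩

/-- The associated weight `ω̃` with values in `[0, ∞]`, cut off outside `[0, 1)`, where the formula
for `ω̃` has no meaning. -/
noncomputable def assocDensity (ω : ℝ → ℝ) (r : ℝ) : ℝ≥0∞ :=
  ENNReal.ofReal ((Ico 0 1).indicator (assocW ω) r)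

theorem assocDensity_of_mem {ω : ℝ → ℝ} {r : ℝ} (hr : r ∈ Ico (0 : ℝ) 1) :
    assocDensity ω r = ENNReal.ofReal (assocW ω r) := by
  rw [assocDensity, indicator_of_mem hr]

namespace RadialWeight

variable {ω : ℝ → ℝ}

theorem intervalIntegrable (hω : RadialWeight ω) {a b : ℝ} (ha : a ∈ Icc (0 : ℝ) 1)
    (hb : b ∈ Icc (0 : ℝ) 1) : IntervalIntegrable ω volume a b := by
  have h : IntervalIntegrable ω volume 0 1 :=
    (intervalIntegrable_iff_integrableOn_Ico_of_le zero_le_one).2 hω.2.1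
  refine h.mono_set ?_
  rw [uIcc_of_le zero_le_one]
  exact uIcc_subset_Icc ha hb

theorem tailInt_sub_tailInt (hω : RadialWeight ω) {a b : ℝ} (ha : a ∈ Icc (0 : ℝ) 1)
    (hb : b ∈ Icc (0 : ℝ) 1) : tailInt ω a - tailInt ω b = ∫ s in a..b, ω s := by
  have hadd := intervalIntegral.integral_add_adjacent_intervals (hω.intervalIntegrable ha hb)
    (hω.intervalIntegrable hb (right_mem_Icc.2 zero_le_one))
  simp only [tailInt]
  linarith

theorem antitoneOn_tailInt (hω : RadialWeight ω) : AntitoneOn (tailInt ω) (Ico 0 1) := by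
  intro a ha b hb hab
  rw [← sub_nonneg, hω.tailInt_sub_tailInt (Ico_subset_Icc_self ha) (Ico_subset_Icc_self hb)]
  exact intervalIntegral.integral_nonneg hab fun s hs =>
    hω.1 s ⟨ha.1.trans hs.1, hs.2.trans_lt hb.2⟩

theorem tailInt_sub_tailInt_le (hω : RadialWeight ω) {c : ℝ} (hc : 0 ≤ c)
    (hup : ∀ r ∈ Ico (0 : ℝ) 1, ω r ≤ c * assocW ω r) {r t : ℝ} (hr : r ∈ Ico (0 : ℝ) 1)
    (ht : t ∈ Ico (0 : ℝ) 1) (hrt : r ≤ t) :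
    tailInt ω r - tailInt ω t ≤ (t - r) * (c * (tailInt ω r / (1 - t))) := by
  have hr' := Ico_subset_Icc_self hr
  have ht' := Ico_subset_Icc_self ht
  rw [hω.tailInt_sub_tailInt hr' ht', ← smul_eq_mul, ← intervalIntegral.integral_const]
  refine intervalIntegral.integral_mono_on hrt (hω.intervalIntegrable hr' ht') (by simp)
    fun s hs => ?_
  have hs' : s ∈ Ico (0 : ℝ) 1 := ⟨hr.1.trans hs.1, hs.2.trans_lt ht.2⟩
  refine (hup s hs').trans ?_
  unfold assocW
  have := hω.2.2 r hr
  have := sub_pos.2 ht.2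
  gcongr
  exacts [hω.antitoneOn_tailInt hr hs' hs.1, hs.2]

theorem le_tailInt_sub_tailInt (hω : RadialWeight ω) {c : ℝ} (hc : 0 ≤ c)
    (hlow : ∀ r ∈ Ico (0 : ℝ) 1, c⁻¹ * assocW ω r ≤ ω r) {r t : ℝ} (hr : r ∈ Ico (0 : ℝ) 1)
    (ht : t ∈ Ico (0 : ℝ) 1) (hrt : r ≤ t) :
    (t - r) * (c⁻¹ * (tailInt ω t / (1 - r))) ≤ tailInt ω r - tailInt ω t := by
  have hr' := Ico_subset_Icc_self hr
  have ht' := Ico_subset_Icc_self ht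
  rw [hω.tailInt_sub_tailInt hr' ht', ← smul_eq_mul, ← intervalIntegral.integral_const]
  refine intervalIntegral.integral_mono_on hrt (by simp) (hω.intervalIntegrable hr' ht')
    fun s hs => ?_
  have hs' : s ∈ Ico (0 : ℝ) 1 := ⟨hr.1.trans hs.1, hs.2.trans_lt ht.2⟩
  refine le_trans ?_ (hlow s hs')
  unfold assocW
  have := hω.2.2 s hs'
  have := sub_pos.2 hs'.2
  gcongr
  exacts [hω.antitoneOn_tailInt hs' ht hs.2, hs.1]

theorem assocW_le_two_mul_of_ge (hω : RadialWeight ω) {r t : ℝ} (hr : r ∈ Ico (0 : ℝ) 1)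
    (ht : t ∈ Ico (0 : ℝ) 1) (htr : t ≤ r) (hdist : 1 - t ≤ 2 * (1 - r)) :
    assocW ω r ≤ 2 * assocW ω t := by
  unfold assocW
  rw [← mul_div_assoc, div_le_div_iff₀ (sub_pos.2 hr.2) (sub_pos.2 ht.2)]
  have := hω.2.2 t ht
  calc tailInt ω r * (1 - t) ≤ tailInt ω t * (2 * (1 - r)) := by
        have := sub_pos.2 ht.2
        gcongr
        exact hω.antitoneOn_tailInt ht hr htr
    _ = 2 * tailInt ω t * (1 - r) := by ring

theorem assocW_le_two_mul_of_le (hω : RadialWeight ω) {c : ℝ} (hc : 0 < c)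
    (hup : ∀ r ∈ Ico (0 : ℝ) 1, ω r ≤ c * assocW ω r) {r t : ℝ} (hr : r ∈ Ico (0 : ℝ) 1)
    (ht : t ∈ Ico (0 : ℝ) 1) (hrt : r ≤ t) (hdist : t - r ≤ (2 * c)⁻¹ * (1 - t)) :
    assocW ω r ≤ 2 * assocW ω t := by
  have := sub_pos.2 ht.2
  have := hω.2.2 r hr
  have hdrop : tailInt ω r - tailInt ω t ≤ tailInt ω r / 2 :=
    calc _ ≤ (t - r) * (c * (tailInt ω r / (1 - t))) :=
          hω.tailInt_sub_tailInt_le hc.le hup hr ht hrt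
      _ ≤ (2 * c)⁻¹ * (1 - t) * (c * (tailInt ω r / (1 - t))) := by gcongr
      _ = _ := by field_simp
  have := hω.2.2 t ht
  calc assocW ω r = tailInt ω r / (1 - r) := rfl
    _ ≤ 2 * tailInt ω t / (1 - t) := by gcongr; linarith
    _ = 2 * assocW ω t := mul_div_assoc _ _ _

theorem assocW_le_two_mul_of_abs_sub_le (hω : RadialWeight ω) {c : ℝ} (hc : 1 ≤ c)
    (hup : ∀ r ∈ Ico (0 : ℝ) 1, ω r ≤ c * assocW ω r) {r t : ℝ} (hr : r ∈ Ico (0 : ℝ) 1)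
    (ht : t ∈ Ico (0 : ℝ) 1) (hrt : |r - t| ≤ (4 * c)⁻¹ * (1 - r)) :
    assocW ω r ≤ 2 * assocW ω t := by
  obtain ⟨hl, hu⟩ := abs_le.1 hrt
  have := sub_pos.2 hr.2
  have hquarter : (4 * c)⁻¹ * (1 - r) ≤ 4⁻¹ * (1 - r) := by gcongr; linarith
  rcases le_total t r with htr | htr
  · exact hω.assocW_le_two_mul_of_ge hr ht htr (by linarith)
  · refine hω.assocW_le_two_mul_of_le (by linarith) hup hr ht htr ?_
    calc t - r ≤ (4 * c)⁻¹ * (1 - r) := by linarith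
      _ ≤ (4 * c)⁻¹ * (2 * (1 - t)) := by gcongr; linarith
      _ = (2 * c)⁻¹ * (1 - t) := by ring

theorem assocW_add_div_one_add_le (hω : RadialWeight ω) {c κ : ℝ} (hc : 0 < c) (hκ : 0 < κ)
    (hlow : ∀ r ∈ Ico (0 : ℝ) 1, c⁻¹ * assocW ω r ≤ ω r) {s : ℝ} (hs : s ∈ Ico (0 : ℝ) 1) :
    assocW ω ((s + κ) / (1 + κ)) ≤ (1 + κ) * (1 + κ / (c * (1 + κ)))⁻¹ * assocW ω s := by
  have hs1 := sub_pos.2 hs.2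
  have ht := add_div_one_add_mem_Ico hκ hs
  set t := (s + κ) / (1 + κ) with ht_def
  have hone_sub : 1 - t = (1 - s) / (1 + κ) := by rw [ht_def]; field_simp; ring
  have hsub : t - s = (1 - s) * κ / (1 + κ) := by rw [ht_def]; field_simp; ring
  have hst : s ≤ t := by rw [← sub_nonneg, hsub]; positivity
  have hdrop : tailInt ω t * (κ / (c * (1 + κ))) ≤ tailInt ω s - tailInt ω t :=
    calc _ = (t - s) * (c⁻¹ * (tailInt ω t / (1 - s))) := by rw [hsub]; field_simp
      _ ≤ _ := hω.le_tailInt_sub_tailInt hc.le hlow hs ht hst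
  have htail : tailInt ω t ≤ tailInt ω s / (1 + κ / (c * (1 + κ))) := by
    rw [le_div_iff₀ (by positivity)]; linarith
  unfold assocW
  rw [hone_sub]
  calc tailInt ω t / ((1 - s) / (1 + κ)) ≤
        tailInt ω s / (1 + κ / (c * (1 + κ))) / ((1 - s) / (1 + κ)) := by gcongr
    _ = _ := by field_simp

theorem assocW_le_of_le (hω : RadialWeight ω) {r R : ℝ} (hr : 0 ≤ r) (hrR : r ≤ R) (hR : R < 1) :
    assocW ω r ≤ tailInt ω 0 / (1 - R) := by
  have h0 : (0 : ℝ) ∈ Ico (0 : ℝ) 1 := by simp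
  have := sub_pos.2 hR
  have := hω.2.2 0 h0
  unfold assocW
  gcongr
  exact hω.antitoneOn_tailInt h0 ⟨hr, hrR.trans_lt hR⟩ hr

theorem continuousOn_assocW (hω : RadialWeight ω) : ContinuousOn (assocW ω) (Ico 0 1) := by
  have htail : ContinuousOn (tailInt ω) (Icc 0 1) := by
    rw [← uIcc_of_le zero_le_one]
    refine intervalIntegral.continuousOn_primitive_interval_left ?_
    rw [uIcc_of_le zero_le_one, integrableOn_Icc_iff_integrableOn_Ico]
    exact hω.2.1
  exact (htail.mono Ico_subset_Icc_self).div (by fun_prop) fun r hr => (sub_pos.2 hr.2).ne'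

theorem isWhitneyWeight_assocDensity (hω : RadialWeight ω) {c : ℝ} (hc : 1 ≤ c)
    (hlow : ∀ r ∈ Ico (0 : ℝ) 1, c⁻¹ * assocW ω r ≤ ω r)
    (hup : ∀ r ∈ Ico (0 : ℝ) 1, ω r ≤ c * assocW ω r) :
    IsWhitneyWeight (4 * c)⁻¹ (assocDensity ω) where
  pos := by positivity
  le_half := by rw [inv_le_comm₀ (by positivity) (by norm_num)]; linarith
  measurable :=
    (measurable_indicator_of_continuousOn hω.continuousOn_assocW measurableSet_Ico).ennreal_ofReal
  zero_ne_zero := by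
    rw [assocDensity_of_mem (by simp)]
    simpa [assocW] using hω.2.2 0 (by simp)
  bounded R hR := by
    refine ⟨(tailInt ω 0 / (1 - R)).toNNReal, fun r hr => ?_⟩
    rw [assocDensity_of_mem ⟨hr.1, hr.2.trans hR⟩]
    exact ENNReal.ofReal_le_ofReal (hω.assocW_le_of_le hr.1 hr.2.le hR)
  almost_constant := by
    refine ⟨2, fun r hr t ht hrt => ?_⟩
    rw [assocDensity_of_mem hr, assocDensity_of_mem ht, ENNReal.coe_ofNat, ← ENNReal.ofReal_ofNat 2,
      ← ENNReal.ofReal_mul (by norm_num)]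
    exact ENNReal.ofReal_le_ofReal (hω.assocW_le_two_mul_of_abs_sub_le hc hup hr ht hrt)
  contraction := by
    have hc0 : 0 < c := by linarith
    set κ := (4 * c)⁻¹ / 4
    have hκ : 0 < κ := by positivity
    refine ⟨(1 + κ / (c * (1 + κ)))⁻¹.toNNReal, ?_, fun s hs => ?_⟩
    · rw [Real.toNNReal_lt_one]
      exact inv_lt_one_of_one_lt₀ (lt_add_of_pos_right _ (by positivity))
    · rw [assocDensity_of_mem hs, assocDensity_of_mem (add_div_one_add_mem_Ico hκ hs),
        ← ENNReal.ofReal, ← ENNReal.ofReal_mul (by positivity),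
        ← ENNReal.ofReal_mul (by positivity)]
      exact ENNReal.ofReal_le_ofReal (hω.assocW_add_div_one_add_le hc0 hκ hlow hs)

theorem aemeasurable_norm (hω : RadialWeight ω) :
    AEMeasurable (fun z : ℂ => ω ‖z‖) (volume.restrict (ball (0 : ℂ) 1)) :=
  (hω.2.1.aemeasurable.mono_ac map_norm_restrict_unitBall_absolutelyContinuous).comp_measurable
    measurable_norm

end RadialWeight

theorem setLIntegral_unitBall_mul_norm_le_of_le {E : Type*} [SeminormedAddCommGroup E]
    [MeasurableSpace E] [OpensMeasurableSpace E] {μ : Measure E} (F : E → ℝ≥0∞)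
    {V W : ℝ → ℝ≥0∞} {C : ℝ≥0} (h : ∀ r ∈ Ico (0 : ℝ) 1, V r ≤ C * W r) :
    ∫⁻ z in ball (0 : E) 1, F z * V ‖z‖ ∂μ ≤ C * ∫⁻ z in ball (0 : E) 1, F z * W ‖z‖ ∂μ := by
  rw [← lintegral_const_mul' _ _ ENNReal.coe_ne_top]
  refine setLIntegral_mono' measurableSet_ball fun z hz => ?_
  rw [mul_left_comm]
  gcongr
  exact h _ ⟨norm_nonneg z, mem_ball_zero_iff.1 hz⟩

theorem RadialWeight.setIntegral_norm_rpow_mul_eq_toReal {E : Type*} [NormedAddCommGroup E]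
    {ω : ℝ → ℝ} (hω : RadialWeight ω) {p : ℝ} (hp : 0 ≤ p) {g : ℂ → E}
    (hg : ContinuousOn g (ball 0 1)) :
    ∫ z in ball (0 : ℂ) 1, ‖g z‖ ^ p * ω ‖z‖ =
      (∫⁻ z in ball (0 : ℂ) 1, ‖g z‖ₑ ^ p * ENNReal.ofReal (ω ‖z‖)).toReal := by
  have hgm := (hg.aestronglyMeasurable (μ := volume) measurableSet_ball).norm.aemeasurable
  rw [integral_eq_lintegral_of_nonneg_ae]
  · congr 1
    refine lintegral_congr fun z => ?_
    rw [ENNReal.ofReal_mul (by positivity), ← ENNReal.ofReal_rpow_of_nonneg (norm_nonneg _) hp,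
      ofReal_norm]
  · filter_upwards [ae_restrict_mem measurableSet_ball] with z hz
    exact mul_nonneg (by positivity) (hω.1 _ ⟨norm_nonneg z, mem_ball_zero_iff.1 hz⟩)
  · exact ((hgm.pow_const p).mul hω.aemeasurable_norm).aestronglyMeasurable

theorem RadialWeight.exists_setLIntegral_enorm_rpow_mul_le {ω : ℝ → ℝ} (hω : RadialWeight ω)
    {c : ℝ} (hc : 1 ≤ c) (hlow : ∀ r ∈ Ico (0 : ℝ) 1, c⁻¹ * assocW ω r ≤ ω r)
    (hup : ∀ r ∈ Ico (0 : ℝ) 1, ω r ≤ c * assocW ω r) {p : ℝ} (hp : 0 < p) :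
    ∃ C : ℝ≥0, ∀ {f : ℂ → ℂ}, DifferentiableOn ℂ f (ball 0 1) → (f 0).im = 0 →
      ∫⁻ z in ball (0 : ℂ) 1, ‖f z‖ₑ ^ p * ENNReal.ofReal (ω ‖z‖) ≤
        C * ∫⁻ z in ball (0 : ℂ) 1, ‖(f z).re‖ₑ ^ p * ENNReal.ofReal (ω ‖z‖) := by
  have hc0 : 0 < c := by linarith
  have hω_le : ∀ r ∈ Ico (0 : ℝ) 1, ENNReal.ofReal (ω r) ≤ c.toNNReal * assocDensity ω r :=
    fun r hr => by
      rw [assocDensity_of_mem hr, ← ENNReal.ofReal, ← ENNReal.ofReal_mul hc0.le]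
      exact ENNReal.ofReal_le_ofReal (hup r hr)
  have hle_ω : ∀ r ∈ Ico (0 : ℝ) 1, assocDensity ω r ≤ c.toNNReal * ENNReal.ofReal (ω r) :=
    fun r hr => by
      rw [assocDensity_of_mem hr, ← ENNReal.ofReal, ← ENNReal.ofReal_mul hc0.le]
      exact ENNReal.ofReal_le_ofReal ((inv_mul_le_iff₀ hc0).1 (hlow r hr))
  obtain ⟨C, hC⟩ :=
    (hω.isWhitneyWeight_assocDensity hc hlow hup).exists_setLIntegral_enorm_rpow_mul_le hp
  refine ⟨c.toNNReal * (C * c.toNNReal), fun {f} hf him => ?_⟩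
  calc ∫⁻ z in ball (0 : ℂ) 1, ‖f z‖ₑ ^ p * ENNReal.ofReal (ω ‖z‖) ≤
        c.toNNReal * ∫⁻ z in ball (0 : ℂ) 1, ‖f z‖ₑ ^ p * assocDensity ω ‖z‖ :=
        setLIntegral_unitBall_mul_norm_le_of_le _ hω_le
    _ ≤ c.toNNReal * (C * ∫⁻ z in ball (0 : ℂ) 1, ‖(f z).re‖ₑ ^ p * assocDensity ω ‖z‖) := by
        gcongr
        exact hC hf him
    _ ≤ c.toNNReal * (C * (c.toNNReal *
          ∫⁻ z in ball (0 : ℂ) 1, ‖(f z).re‖ₑ ^ p * ENNReal.ofReal (ω ‖z‖))) := by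
        gcongr
        exact setLIntegral_unitBall_mul_norm_le_of_le _ hle_ω
    _ = _ := by push_cast; ring

theorem inv_mul_toReal_le_and_toReal_le_mul {x y : ℝ≥0∞} {C : ℝ≥0} (hyx : y ≤ x)
    (hxy : x ≤ C * y) :
    (max 1 (C : ℝ))⁻¹ * x.toReal ≤ y.toReal ∧ y.toReal ≤ max 1 (C : ℝ) * x.toReal := by
  rw [inv_mul_le_iff₀ (by positivity)]
  rcases eq_or_ne y ⊤ with rfl | hy
  · simp [top_le_iff.1 hyx]
  · have hCy : C * y ≠ ⊤ := ENNReal.mul_ne_top ENNReal.coe_ne_top hy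
    refine ⟨?_, (ENNReal.toReal_mono (ne_top_of_le_ne_top hCy hxy) hyx).trans
      (le_mul_of_one_le_left ENNReal.toReal_nonneg (le_max_left _ _))⟩
    calc x.toReal ≤ (C * y).toReal := ENNReal.toReal_mono hCy hxy
      _ = C * y.toReal := by rw [ENNReal.toReal_mul, ENNReal.coe_toReal]
      _ ≤ max 1 (C : ℝ) * y.toReal := by gcongr; exact le_max_right _ _

/-- For `0 < p < ∞` and a regular radial weight `ω` (i.e. `ω(r) ≍ ω̂(r)/(1-r)`
on `[0,1)`), there is `C ≥ 1` with `C⁻¹‖f‖_{A^p_ω} ≤ ‖Re f‖_{L^p_ω} ≤ C‖f‖_{A^p_ω}` for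
every analytic `f` on `𝔻` with `Im f(0) = 0` (norms stated via their `p`-th powers). -/
theorem statement9 (p : ℝ) (hp : 0 < p) (ω : ℝ → ℝ) (hω : RadialWeight ω)
    (hreg : ∃ c : ℝ, 1 ≤ c ∧ ∀ r ∈ Set.Ico (0:ℝ) 1,
      c⁻¹ * assocW ω r ≤ ω r ∧ ω r ≤ c * assocW ω r) :
    ∃ C : ℝ, 1 ≤ C ∧ ∀ f : ℂ → ℂ, DifferentiableOn ℂ f (Metric.ball (0:ℂ) 1) →
      (f 0).im = 0 →
      C⁻¹ * ApNorm p ω f ≤ LpReNorm p ω f ∧ LpReNorm p ω f ≤ C * ApNorm p ω f := by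
  obtain ⟨c, hc, hcω⟩ := hreg
  obtain ⟨C, hC⟩ := hω.exists_setLIntegral_enorm_rpow_mul_le hc (fun r hr => (hcω r hr).1)
    (fun r hr => (hcω r hr).2) hp
  refine ⟨max 1 C, le_max_left _ _, fun f hf him => ?_⟩
  have hAp := hω.setIntegral_norm_rpow_mul_eq_toReal hp.le hf.continuousOn
  have hRe := hω.setIntegral_norm_rpow_mul_eq_toReal hp.le
    (Complex.continuous_re.comp_continuousOn hf.continuousOn)
  have hre_le : ∫⁻ z in ball (0 : ℂ) 1, ‖(f z).re‖ₑ ^ p * ENNReal.ofReal (ω ‖z‖) ≤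
      ∫⁻ z in ball (0 : ℂ) 1, ‖f z‖ₑ ^ p * ENNReal.ofReal (ω ‖z‖) := by
    gcongr with z
    exact enorm_le_iff_norm_le.2 (Complex.abs_re_le_norm (f z))
  simp only [Function.comp_apply, Real.norm_eq_abs] at hRe
  simp only [ApNorm, LpReNorm, hAp, hRe, mul_left_comm _ π⁻¹,
    mul_le_mul_iff_right₀ (inv_pos.2 Real.pi_pos)]
  exact inv_mul_toReal_le_and_toReal_le_mul hre_le (hC hf him)
end

section
/- Let φ : [0,1] → [0,∞) be a decreasing function with lim_{r→1^-} φ(r) = 0 and φ(r) > 0 for 0 ≤ r < 1. Then there exists a radial weight ω = ω_φ such that ω̃ ∉ D̂, yet for every 0 < p < ∞ one has the inclusions A^p ⊂ A^p_ω ⊂ A^p_φ; that is, for every analytic f on 𝔻: if ∫_𝔻 |f|^p dA < ∞ then ∫_𝔻 |f|^p ω dA < ∞, and if ∫_𝔻 |f|^p ω dA < ∞ then ∫_𝔻 |f|^p φ(|z|) dA < ∞. -/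
/-!
The weight `ω` differs from `φ` only on thin layers accumulating at `1`, where it is raised to a
constant `M ≥ φ`. Then `φ ≤ ω ≤ M`, and both inclusions hold by comparison of integrands.
The `n`-th layer is `[1 - 2δ, 1 - δ)` with `δ = 2^{-n²}`.

The layer alone makes the tail of `ω̃` at `1 - 2δ` at least `M δ / 8`. The midpoint of `1 - 2δ` and
`1` is `1 - δ`, and beyond it `ω = φ` is small until the next layer, which starts at distance
`4^{-n} δ` from `1`. Hence `ω̃` is small on most of `[1 - δ, 1)`, its tail at `1 - δ` is `o(δ)`, and
no doubling constant exists.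
-/

open MeasureTheory Set

section Tails

variable {ω : ℝ → ℝ} {r s t : ℝ}

lemma intervalIntegrable_of_integrableOn_Ico (hint : IntegrableOn ω (Ico 0 1))
    (hr : r ∈ Ico (0 : ℝ) 1) : IntervalIntegrable ω volume r 1 :=
  (intervalIntegrable_iff_integrableOn_Ico_of_le hr.2.le).2
    (hint.mono_set (Ico_subset_Ico_left hr.1))

lemma tailInt_le_of_le_on_Ioo {a b : ℝ} (hrs : r ≤ s) (hs : s ≤ 1)
    (hint : IntervalIntegrable ω volume r 1)
    (ha : ∀ x ∈ Ioo r s, ω x ≤ a) (hb : ∀ x ∈ Ioo s 1, ω x ≤ b) :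
    tailInt ω r ≤ a * (s - r) + b * (1 - s) := by
  have hsmem : s ∈ uIcc r 1 := by simp [uIcc_of_le (hrs.trans hs), hrs, hs]
  have hrs_int : IntervalIntegrable ω volume r s :=
    hint.mono_set (uIcc_subset_uIcc_left hsmem)
  have hs_int : IntervalIntegrable ω volume s 1 :=
    hint.mono_set (uIcc_subset_uIcc_right hsmem)
  calc tailInt ω r = (∫ x in r..s, ω x) + ∫ x in s..1, ω x :=
        (intervalIntegral.integral_add_adjacent_intervals hrs_int hs_int).symm
    _ ≤ (∫ _ in r..s, a) + ∫ _ in s..1, b := add_le_add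
        (intervalIntegral.integral_mono_on_of_le_Ioo hrs hrs_int intervalIntegrable_const ha)
        (intervalIntegral.integral_mono_on_of_le_Ioo hs hs_int intervalIntegrable_const hb)
    _ = a * (s - r) + b * (1 - s) := by
        simp only [intervalIntegral.integral_const, smul_eq_mul, mul_comm]

lemma mul_sub_le_tailInt {a : ℝ} (hrs : r ≤ s) (hst : s ≤ t) (ht : t ≤ 1)
    (hint : IntervalIntegrable ω volume r 1) (hnonneg : ∀ x ∈ Ioo r 1, 0 ≤ ω x)
    (ha : ∀ x ∈ Ioo s t, a ≤ ω x) : a * (t - s) ≤ tailInt ω r := by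
  have hst_int : IntervalIntegrable ω volume s t := hint.mono_set <| by
    rw [uIcc_of_le hst, uIcc_of_le (hrs.trans (hst.trans ht))]
    exact Icc_subset_Icc hrs ht
  have hae : 0 ≤ᵐ[volume.restrict (Ioc r 1)] ω := by
    rw [← restrict_Ioo_eq_restrict_Ioc]
    exact ae_restrict_of_forall_mem measurableSet_Ioo hnonneg
  calc a * (t - s) = ∫ _ in s..t, a := by
        rw [intervalIntegral.integral_const, smul_eq_mul, mul_comm]
    _ ≤ ∫ x in s..t, ω x :=
        intervalIntegral.integral_mono_on_of_le_Ioo hst intervalIntegrable_const hst_int ha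
    _ ≤ tailInt ω r := intervalIntegral.integral_mono_interval hrs hst ht hae hint

lemma continuousOn_tailInt (hint : IntegrableOn ω (Ico 0 1)) :
    ContinuousOn (tailInt ω) (Icc 0 1) := by
  rw [← integrableOn_Icc_iff_integrableOn_Ico, ← uIcc_of_le zero_le_one] at hint
  exact uIcc_of_le (zero_le_one' ℝ) ▸ intervalIntegral.continuousOn_primitive_interval_left hint

end Tails

section AssociatedWeight

variable {ω : ℝ → ℝ} {M : ℝ}

lemma assocW_mem_Icc (hint : IntegrableOn ω (Ico 0 1)) (hω : ∀ x ∈ Ico (0 : ℝ) 1, ω x ∈ Icc 0 M)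
    {x : ℝ} (hx : x ∈ Ico (0 : ℝ) 1) : assocW ω x ∈ Icc 0 M := by
  have hx_int := intervalIntegrable_of_integrableOn_Ico hint hx
  have hbound : ∀ y ∈ Ioo x 1, ω y ∈ Icc 0 M := fun y hy => hω y ⟨hx.1.trans hy.1.le, hy.2⟩
  have hpos : 0 < 1 - x := sub_pos.2 hx.2
  have hlower := mul_sub_le_tailInt le_rfl hx.2.le le_rfl hx_int (fun y hy => (hbound y hy).1)
    fun y hy => (hbound y hy).1
  have hupper := tailInt_le_of_le_on_Ioo (a := M) le_rfl hx.2.le hx_int (by simp)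
    fun y hy => (hbound y hy).2
  rw [assocW, mem_Icc, div_le_iff₀ hpos]
  exact ⟨div_nonneg (by simpa using hlower) hpos.le, by simpa using hupper⟩

lemma integrableOn_assocW (hint : IntegrableOn ω (Ico 0 1))
    (hω : ∀ x ∈ Ico (0 : ℝ) 1, ω x ∈ Icc 0 M) : IntegrableOn (assocW ω) (Ico 0 1) := by
  have hcont : ContinuousOn (assocW ω) (Ico 0 1) :=
    ((continuousOn_tailInt hint).mono Ico_subset_Icc_self).div (by fun_prop)
      fun x hx => (sub_pos.2 hx.2).ne'
  refine .of_bound (by simp) (hcont.aestronglyMeasurable measurableSet_Ico) M ?_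
  refine ae_restrict_of_forall_mem measurableSet_Ico fun x hx => ?_
  have hx_mem := assocW_mem_Icc hint hω hx
  rw [Real.norm_of_nonneg hx_mem.1]
  exact hx_mem.2

lemma le_tailInt_assocW_of_layer (hint : IntegrableOn ω (Ico 0 1))
    (hω : ∀ x ∈ Ico (0 : ℝ) 1, ω x ∈ Icc 0 M) {c δ : ℝ} (hc : 0 ≤ c)
    (hδ : δ ∈ Ioc (0 : ℝ) (1 / 2)) (hlayer : ∀ x ∈ Ico (1 - 2 * δ) (1 - δ), c ≤ ω x) :
    c * δ / 8 ≤ tailInt (assocW ω) (1 - 2 * δ) := by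
  obtain ⟨hδ0, hδ1⟩ := hδ
  have hmem : ∀ x, 1 - 2 * δ ≤ x → x < 1 → x ∈ Ico (0 : ℝ) 1 := fun x h₁ h₂ =>
    ⟨by linarith, h₂⟩
  have hassoc : ∀ x ∈ Ioo (1 - 2 * δ) (1 - 3 / 2 * δ), c / 4 ≤ assocW ω x := by
    rintro x ⟨hx, hx'⟩
    have hx_mem := hmem x hx.le (by linarith)
    rw [assocW, le_div_iff₀ (sub_pos.2 hx_mem.2)]
    calc c / 4 * (1 - x) ≤ c / 4 * (2 * δ) := by gcongr; linarith
      _ = c * (δ / 2) := by ring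
      _ ≤ c * (1 - δ - x) := by gcongr; linarith
      _ ≤ tailInt ω x :=
          mul_sub_le_tailInt le_rfl (by linarith) (by linarith)
            (intervalIntegrable_of_integrableOn_Ico hint hx_mem)
            (fun y hy => (hω y ⟨hx_mem.1.trans hy.1.le, hy.2⟩).1)
            fun y hy => hlayer y ⟨hx.le.trans hy.1.le, hy.2⟩
  calc c * δ / 8 = c / 4 * ((1 - 3 / 2 * δ) - (1 - 2 * δ)) := by ring
    _ ≤ tailInt (assocW ω) (1 - 2 * δ) :=
        mul_sub_le_tailInt le_rfl (by linarith) (by linarith)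
          (intervalIntegrable_of_integrableOn_Ico (integrableOn_assocW hint hω)
            (hmem _ le_rfl (by linarith)))
          (fun x hx => (assocW_mem_Icc hint hω (hmem x hx.1.le hx.2)).1) hassoc

lemma assocW_le_two_mul_of_gap (hint : IntegrableOn ω (Ico 0 1))
    (hω : ∀ x ∈ Ico (0 : ℝ) 1, ω x ∈ Icc 0 M) {x ε ρ : ℝ} (hx : x ∈ Ico (0 : ℝ) 1)
    (hε : ε ∈ Icc (0 : ℝ) 1) (hρ : 0 ≤ ρ) (hρx : ρ ≤ ε * (1 - x))
    (hgap : ∀ y ∈ Ioo x (1 - ρ), ω y ≤ ε * M) : assocW ω x ≤ 2 * ε * M := by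
  have hM : 0 ≤ M := (hω x hx).1.trans (hω x hx).2
  have hpos : 0 < 1 - x := sub_pos.2 hx.2
  have hxρ : x ≤ 1 - ρ := by linarith [mul_le_of_le_one_left hpos.le hε.2]
  rw [assocW, div_le_iff₀ hpos]
  calc tailInt ω x ≤ ε * M * (1 - ρ - x) + M * (1 - (1 - ρ)) :=
        tailInt_le_of_le_on_Ioo hxρ (by linarith) (intervalIntegrable_of_integrableOn_Ico hint hx)
          hgap fun y hy => (hω y ⟨hx.1.trans (hxρ.trans hy.1.le), hy.2⟩).2
    _ = ε * M * (1 - ρ - x) + M * ρ := by ring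
    _ ≤ ε * M * (1 - x) + M * (ε * (1 - x)) := by
        have hεM : 0 ≤ ε * M := mul_nonneg hε.1 hM
        gcongr
        exact sub_le_self 1 hρ
    _ = 2 * ε * M * (1 - x) := by ring

lemma tailInt_assocW_le_of_gap (hint : IntegrableOn ω (Ico 0 1))
    (hω : ∀ x ∈ Ico (0 : ℝ) 1, ω x ∈ Icc 0 M) {δ η : ℝ} (hδ : δ ∈ Ioc (0 : ℝ) 1)
    (hη : η ∈ Ioo (0 : ℝ) 1)
    (hgap : ∀ x ∈ Ico (1 - δ) (1 - η ^ 2 * δ), ω x ≤ η * M) :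
    tailInt (assocW ω) (1 - δ) ≤ 3 * η * M * δ := by
  obtain ⟨hδ0, hδ1⟩ := hδ
  obtain ⟨hη0, hη1⟩ := hη
  have hM : 0 ≤ M := (hω 0 (by simp)).1.trans (hω 0 (by simp)).2
  have hηδ_pos : 0 < η * δ := mul_pos hη0 hδ0
  have hηδ : η * δ < δ := mul_lt_of_lt_one_left hδ0 hη1
  have hmem : ∀ x, 1 - δ ≤ x → x < 1 → x ∈ Ico (0 : ℝ) 1 := fun x h₁ h₂ => ⟨by linarith, h₂⟩
  have hassoc : ∀ x ∈ Ioo (1 - δ) (1 - η * δ), assocW ω x ≤ 2 * η * M := fun x hx =>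
    assocW_le_two_mul_of_gap hint hω (hmem x hx.1.le (by linarith [hx.2])) ⟨hη0.le, hη1.le⟩
      (by positivity)
      (calc η ^ 2 * δ = η * (η * δ) := by ring
        _ ≤ η * (1 - x) := by gcongr; linarith [hx.2])
      fun y hy => hgap y ⟨hx.1.le.trans hy.1.le, hy.2⟩
  calc tailInt (assocW ω) (1 - δ)
      ≤ 2 * η * M * (1 - η * δ - (1 - δ)) + M * (1 - (1 - η * δ)) :=
        tailInt_le_of_le_on_Ioo (by linarith) (by linarith)
          (intervalIntegrable_of_integrableOn_Ico (integrableOn_assocW hint hω)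
            (hmem _ le_rfl (by linarith)))
          hassoc fun x hx => (assocW_mem_Icc hint hω (hmem x (by linarith [hx.1]) hx.2)).2
    _ ≤ 3 * η * M * δ := by
        have : 0 ≤ η * M * (η * δ) := by positivity
        linarith

theorem not_dhat_assocW_of_layers (hM : 0 < M) (hint : IntegrableOn ω (Ico 0 1))
    (hω : ∀ x ∈ Ico (0 : ℝ) 1, ω x ∈ Icc 0 M)
    (hlayers : ∀ η ∈ Ioo (0 : ℝ) 1, ∃ δ ∈ Ioc (0 : ℝ) (1 / 2),
      (∀ x ∈ Ico (1 - 2 * δ) (1 - δ), M ≤ ω x) ∧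
        ∀ x ∈ Ico (1 - δ) (1 - η ^ 2 * δ), ω x ≤ η * M) :
    ¬ Dhat (assocW ω) := by
  rintro ⟨C, hC, hdbl⟩
  have : 0 < C := one_pos.trans_le hC
  -- Any `η` with `24 C η < 1` works.
  have hη : 1 / (25 * C) ∈ Ioo (0 : ℝ) 1 :=
    ⟨by positivity, (div_lt_one (by positivity)).2 (by linarith)⟩
  obtain ⟨δ, hδ, hlayer, hgap⟩ := hlayers _ hη
  have hMδ : 0 < M * δ := mul_pos hM hδ.1
  have hcontra : M * δ / 8 ≤ 3 / 25 * (M * δ) :=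
    calc M * δ / 8 ≤ tailInt (assocW ω) (1 - 2 * δ) :=
          le_tailInt_assocW_of_layer hint hω hM.le hδ hlayer
      _ ≤ C * tailInt (assocW ω) ((1 + (1 - 2 * δ)) / 2) :=
          hdbl _ ⟨by linarith [hδ.2], by linarith [hδ.1]⟩
      _ = C * tailInt (assocW ω) (1 - δ) := by ring_nf
      _ ≤ C * (3 * (1 / (25 * C)) * M * δ) := by
          gcongr
          exact tailInt_assocW_le_of_gap hint hω ⟨hδ.1, by linarith [hδ.2]⟩ hη hgap
      _ = 3 / 25 * (M * δ) := by field_simp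
  linarith

end AssociatedWeight

/-- The width `2^{-n²}` of the `n`-th layer. -/
noncomputable def layerWidth (n : ℕ) : ℝ := (1 / 2 : ℝ) ^ (n ^ 2)

lemma layerWidth_pos (n : ℕ) : 0 < layerWidth n := by
  unfold layerWidth
  positivity

lemma layerWidth_antitone : Antitone layerWidth := fun _ _ h =>
  pow_le_pow_of_le_one (by norm_num) (by norm_num) (Nat.pow_le_pow_left h 2)

lemma layerWidth_le_half {n : ℕ} (hn : 1 ≤ n) : layerWidth n ≤ 1 / 2 :=
  (layerWidth_antitone hn).trans_eq (by norm_num [layerWidth])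

lemma two_mul_layerWidth_succ (n : ℕ) :
    2 * layerWidth (n + 1) = (1 / 4 : ℝ) ^ n * layerWidth n := by
  have hsq : (n + 1) ^ 2 = n ^ 2 + 2 * n + 1 := by ring
  rw [layerWidth, layerWidth, hsq, pow_add, pow_add, pow_mul]
  norm_num
  ring

lemma tendsto_layerWidth : Filter.Tendsto layerWidth Filter.atTop (nhds 0) :=
  (tendsto_pow_atTop_nhds_zero_of_lt_one (by norm_num) (by norm_num)).comp
    (Filter.tendsto_pow_atTop two_ne_zero)

/-- The union of the layers `[1 - 2δ, 1 - δ)`, where `δ` runs through the values of `layerWidth`.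
The zeroth layer lies to the left of `0`. -/
def layers : Set ℝ := ⋃ n, Ico (1 - 2 * layerWidth n) (1 - layerWidth n)

lemma measurableSet_layers : MeasurableSet layers := .iUnion fun _ => measurableSet_Ico

lemma notMem_layers_of_mem_gap {n : ℕ} {x : ℝ}
    (hx : x ∈ Ico (1 - layerWidth n) (1 - 2 * layerWidth (n + 1))) : x ∉ layers := by
  simp only [layers, mem_iUnion, not_exists]
  rintro m ⟨hm, hm'⟩
  rcases le_or_gt m n with hmn | hnm
  · linarith [layerWidth_antitone hmn, hx.1]
  · linarith [layerWidth_antitone (Nat.succ_le_of_lt hnm), hx.2]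

open Classical in
/-- The weight `g` raised to the constant `M` on the layers. -/
noncomputable def layeredWeight (g : ℝ → ℝ) (M : ℝ) : ℝ → ℝ := layers.piecewise (fun _ => M) g

section LayeredWeight

variable {g : ℝ → ℝ} {M : ℝ}

lemma layeredWeight_of_mem {x : ℝ} (hx : x ∈ layers) : layeredWeight g M x = M := by
  classical exact piecewise_eq_of_mem _ _ _ hx

lemma layeredWeight_of_notMem {x : ℝ} (hx : x ∉ layers) : layeredWeight g M x = g x := by
  classical exact piecewise_eq_of_notMem _ _ _ hx

lemma layeredWeight_eq_on_layer (n : ℕ) :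
    ∀ x ∈ Ico (1 - 2 * layerWidth n) (1 - layerWidth n), layeredWeight g M x = M :=
  fun _ hx => layeredWeight_of_mem (mem_iUnion_of_mem n hx)

lemma measurable_layeredWeight (hg : Measurable g) : Measurable (layeredWeight g M) := by
  classical exact Measurable.piecewise measurableSet_layers measurable_const hg

lemma le_layeredWeight (hg : ∀ x, g x ≤ M) (x : ℝ) : g x ≤ layeredWeight g M x := by
  by_cases hx : x ∈ layers
  · exact (hg x).trans_eq (layeredWeight_of_mem hx).symm
  · exact (layeredWeight_of_notMem hx).ge

lemma layeredWeight_le (hg : ∀ x, g x ≤ M) (x : ℝ) : layeredWeight g M x ≤ M := by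
  by_cases hx : x ∈ layers
  · exact (layeredWeight_of_mem hx).le
  · exact (layeredWeight_of_notMem hx).trans_le (hg x)

lemma layeredWeight_mem_Icc (hg : ∀ x, g x ∈ Icc 0 M) (x : ℝ) :
    layeredWeight g M x ∈ Icc 0 M :=
  ⟨(hg x).1.trans (le_layeredWeight (fun y => (hg y).2) x), layeredWeight_le (fun y => (hg y).2) x⟩

lemma integrableOn_layeredWeight (hmeas : Measurable g) (hg : ∀ x, g x ∈ Icc 0 M) :
    IntegrableOn (layeredWeight g M) (Ico 0 1) := by
  refine Measure.integrableOn_of_bounded (M := M) (by simp)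
    (measurable_layeredWeight hmeas).aestronglyMeasurable (.of_forall fun x => ?_)
  rw [Real.norm_of_nonneg (layeredWeight_mem_Icc hg x).1]
  exact (layeredWeight_mem_Icc hg x).2

lemma radialWeight_layeredWeight (hM : 0 < M) (hmeas : Measurable g) (hg : ∀ x, g x ∈ Icc 0 M) :
    RadialWeight (layeredWeight g M) := by
  have hint := integrableOn_layeredWeight hmeas hg
  refine ⟨fun r _ => (layeredWeight_mem_Icc hg r).1, hint, fun r hr => ?_⟩
  obtain ⟨n, hn⟩ : ∃ n, layerWidth n < (1 - r) / 2 :=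
    (tendsto_layerWidth.eventually_lt_const (half_pos (sub_pos.2 hr.2))).exists
  have hwidth := layerWidth_pos n
  calc 0 < M * (1 - layerWidth n - (1 - 2 * layerWidth n)) := mul_pos hM (by linarith)
    _ ≤ tailInt (layeredWeight g M) r :=
        mul_sub_le_tailInt (by linarith) (by linarith) (by linarith)
          (intervalIntegrable_of_integrableOn_Ico hint hr)
          (fun x _ => (layeredWeight_mem_Icc hg x).1)
          fun x hx => (layeredWeight_eq_on_layer n x (Ioo_subset_Ico_self hx)).ge

lemma exists_layer_before_gap (hM : 0 < M)
    (hlim : Filter.Tendsto g (nhdsWithin 1 (Iio 1)) (nhds 0)) {η : ℝ} (hη : 0 < η) :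
    ∃ δ ∈ Ioc (0 : ℝ) (1 / 2), (∀ x ∈ Ico (1 - 2 * δ) (1 - δ), M ≤ layeredWeight g M x) ∧
      ∀ x ∈ Ico (1 - δ) (1 - η ^ 2 * δ), layeredWeight g M x ≤ η * M := by
  obtain ⟨l, hl, hsmall⟩ : ∃ l < 1, ∀ x ∈ Ioo l 1, g x ≤ η * M :=
    mem_nhdsLT_iff_exists_Ioo_subset.1 (hlim.eventually_le_const (mul_pos hη hM))
  have hratio : ∀ᶠ n : ℕ in Filter.atTop, (1 / 4 : ℝ) ^ n ≤ η ^ 2 :=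
    (tendsto_pow_atTop_nhds_zero_of_lt_one (by norm_num) (by norm_num)).eventually_le_const
      (pow_pos hη 2)
  obtain ⟨n, hn_ratio, hn_small, hn⟩ :=
    (hratio.and ((tendsto_layerWidth.eventually_lt_const (sub_pos.2 hl)).and
      (Filter.eventually_ge_atTop 1))).exists
  refine ⟨layerWidth n, ⟨layerWidth_pos n, layerWidth_le_half hn⟩,
    fun x hx => (layeredWeight_eq_on_layer n x hx).ge, fun x hx => ?_⟩
  have hnext : 2 * layerWidth (n + 1) ≤ η ^ 2 * layerWidth n :=
    (two_mul_layerWidth_succ n).trans_le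
      (mul_le_mul_of_nonneg_right hn_ratio (layerWidth_pos n).le)
  have hx_gap : x ∈ Ico (1 - layerWidth n) (1 - 2 * layerWidth (n + 1)) :=
    ⟨hx.1, hx.2.trans_le (by linarith)⟩
  rw [layeredWeight_of_notMem (notMem_layers_of_mem_gap hx_gap)]
  exact hsmall x ⟨by linarith [hx.1], by linarith [hx_gap.2, layerWidth_pos (n + 1)]⟩

end LayeredWeight

lemma measurable_indicator_of_domRestrict {α β : Type*} [MeasurableSpace α] [MeasurableSpace β]
    [Zero β] {s : Set α} {f : α → β} (hs : MeasurableSet s) (hf : Measurable (s.domRestrict f)) :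
    Measurable (s.indicator f) := by
  refine measurable_of_restrict_of_restrict_compl hs ?_ ?_
  · rwa [domRestrict_eq_domRestrict_iff.2 eqOn_indicator]
  · rw [domRestrict_eq_domRestrict_iff.2 (eqOn_indicator' (f := f))]
    exact measurable_zero

lemma integrable_mul_of_nonneg_of_le {α : Type*} [MeasurableSpace α] {μ : Measure α}
    {F u v : α → ℝ} (hu : AEMeasurable u μ) (hv : AEMeasurable v μ) (hu0 : 0 ≤ᵐ[μ] u)
    (huv : u ≤ᵐ[μ] v) (hFv : Integrable (fun x => F x * v x) μ) :
    Integrable (fun x => F x * u x) μ := by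
  have hbdd : ∀ᵐ x ∂μ, ‖u x / v x‖ ≤ 1 := by
    filter_upwards [hu0, huv] with x hx0 hxv
    rw [Real.norm_of_nonneg (div_nonneg hx0 (hx0.trans hxv))]
    exact div_le_one_of_le₀ hxv (hx0.trans hxv)
  refine (hFv.mul_bdd (c := 1) (hu.div hv).aestronglyMeasurable hbdd).congr ?_
  filter_upwards [hu0, huv] with x hx0 hxv
  -- `F u = (F v) (u / v)` also where `v` vanishes, since `u` vanishes there too.
  rw [mul_assoc, Pi.div_apply, mul_div_cancel_of_imp' fun h => le_antisymm (h ▸ hxv) hx0]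

theorem statement10_general {φ : ℝ → ℝ} (hmeas : Measurable ((Ico (0 : ℝ) 1).domRestrict φ))
    (hnonneg : ∀ r ∈ Ico (0 : ℝ) 1, 0 ≤ φ r) (hbdd : BddAbove (φ '' Ico 0 1))
    (hlim : Filter.Tendsto φ (nhdsWithin 1 (Iio 1)) (nhds 0)) :
    ∃ ω : ℝ → ℝ, RadialWeight ω ∧ IntegrableOn (assocW ω) (Ico 0 1) ∧ ¬ Dhat (assocW ω) ∧
      ∀ F : ℂ → ℝ,
        (IntegrableOn F (Metric.ball 0 1) →
          IntegrableOn (fun z => F z * ω ‖z‖) (Metric.ball 0 1)) ∧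
        (IntegrableOn (fun z => F z * ω ‖z‖) (Metric.ball 0 1) →
          IntegrableOn (fun z => F z * φ ‖z‖) (Metric.ball 0 1)) := by
  obtain ⟨M, hM, hφM⟩ : ∃ M > 0, ∀ r ∈ Ico (0 : ℝ) 1, φ r ≤ M := by
    obtain ⟨B, hB⟩ := hbdd
    exact ⟨max B 1, by positivity, fun r hr => le_max_of_le_left (hB (mem_image_of_mem φ hr))⟩
  set g : ℝ → ℝ := (Ico 0 1).indicator φ
  have hgφ : EqOn g φ (Ico 0 1) := eqOn_indicator
  have hg_meas : Measurable g := measurable_indicator_of_domRestrict measurableSet_Ico hmeas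
  have hg : ∀ x, g x ∈ Icc 0 M := fun x =>
    ⟨indicator_nonneg hnonneg x, indicator_apply_le' (hφM x) fun _ => hM.le⟩
  have hg_lim : Filter.Tendsto g (nhdsWithin 1 (Iio 1)) (nhds 0) :=
    hlim.congr' (hgφ.symm.eventuallyEq_of_mem (Ico_mem_nhdsLT one_pos))
  set ω := layeredWeight g M
  have hω_meas : Measurable fun z : ℂ => ω ‖z‖ :=
    (measurable_layeredWeight hg_meas).comp measurable_norm
  have hint : IntegrableOn ω (Ico 0 1) := integrableOn_layeredWeight hg_meas hg
  have hω := layeredWeight_mem_Icc hg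
  refine ⟨ω, radialWeight_layeredWeight hM hg_meas hg, integrableOn_assocW hint fun x _ => hω x,
    not_dhat_assocW_of_layers hM hint (fun x _ => hω x)
      fun η hη => exists_layer_before_gap hM hg_lim hη.1, fun F => ⟨fun hF => ?_, fun hF => ?_⟩⟩
  · exact integrable_mul_of_nonneg_of_le hω_meas.aemeasurable aemeasurable_const
      (.of_forall fun z => (hω ‖z‖).1) (.of_forall fun z => (hω ‖z‖).2) (hF.mul_const M)
  · have hFg : IntegrableOn (fun z => F z * g ‖z‖) (Metric.ball 0 1) :=
      integrable_mul_of_nonneg_of_le (hg_meas.comp measurable_norm).aemeasurable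
        hω_meas.aemeasurable (.of_forall fun z => (hg ‖z‖).1)
        (.of_forall fun z => le_layeredWeight (fun x => (hg x).2) ‖z‖) hF
    refine hFg.congr_fun (fun z hz => ?_) measurableSet_ball
    simp only [hgφ ⟨norm_nonneg z, mem_ball_zero_iff.1 hz⟩]

/-- Given a decreasing `φ : [0,1] → [0,∞)` with `φ → 0` at `1⁻` and `φ > 0` on
`[0,1)`, there is a radial weight `ω` with `ω̃ ∉ D̂` (i.e. it is not the case that `ω̃` is a
weight belonging to `D̂`), yet `A^p ⊂ A^p_ω ⊂ A^p_φ` for all `0 < p < ∞`. -/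
theorem statement10 (φ : ℝ → ℝ) (hφ0 : ∀ r ∈ Set.Icc (0:ℝ) 1, 0 ≤ φ r)
    (hdec : AntitoneOn φ (Set.Icc (0:ℝ) 1))
    (hlim : Filter.Tendsto φ (nhdsWithin 1 (Set.Iio (1:ℝ))) (nhds 0))
    (hpos : ∀ r ∈ Set.Ico (0:ℝ) 1, 0 < φ r) :
    ∃ ω : ℝ → ℝ, RadialWeight ω ∧
      ¬ (MeasureTheory.IntegrableOn (assocW ω) (Set.Ico 0 1) ∧ Dhat (assocW ω)) ∧
      ∀ p : ℝ, 0 < p → ∀ f : ℂ → ℂ, DifferentiableOn ℂ f (Metric.ball (0:ℂ) 1) →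
        (MeasureTheory.IntegrableOn (fun z => ‖f z‖ ^ p) (Metric.ball (0:ℂ) 1) →
          MeasureTheory.IntegrableOn (fun z => ‖f z‖ ^ p * ω ‖z‖) (Metric.ball (0:ℂ) 1)) ∧
        (MeasureTheory.IntegrableOn (fun z => ‖f z‖ ^ p * ω ‖z‖) (Metric.ball (0:ℂ) 1) →
          MeasureTheory.IntegrableOn (fun z => ‖f z‖ ^ p * φ ‖z‖) (Metric.ball (0:ℂ) 1)) := by
  have hmeas : Measurable ((Ico (0 : ℝ) 1).domRestrict φ) :=
    (antitoneOn_iff_antitone.1 (hdec.mono Ico_subset_Icc_self)).measurable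
  have hbdd : BddAbove (φ '' Ico 0 1) := ⟨φ 0, forall_mem_image.2 fun r hr =>
    hdec (left_mem_Icc.2 zero_le_one) (Ico_subset_Icc_self hr) hr.1⟩
  obtain ⟨ω, hω, -, hdbl, hincl⟩ :=
    statement10_general hmeas (fun r hr => hφ0 r (Ico_subset_Icc_self hr)) hbdd hlim
  exact ⟨ω, hω, fun h => hdbl h.2, fun p _ f _ => hincl fun z => ‖f z‖ ^ p⟩
end

section
/- For each β > 0 there exists a radial weight ω ∈ D̂ such that the weight ω_{[β]}, defined by ω_{[β]}(r) = ω(r)(1−r)^β for 0 ≤ r < 1, does not belong to D̂. In other words, the class D̂ is not closed under multiplication by (1−r)^β for any β > 0. -/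
/-!
In the variable `u = log (e / (1 - r))` the tail of `r ↦ (1 - r)⁻¹ g(u(r))` is `∫_u^∞ g`, the map
`r ↦ (1 + r) / 2` is the translation `u ↦ u + log 2`, and multiplication by `(1 - r)^β` multiplies
`g` by `exp (β (1 - u))`.

Take `g = u⁻²` on the union of the blocks `[4ⁿ, 2·4ⁿ]` and `g = 0` elsewhere. A whole block starts
between `v` and `4v`, so `∫_v^∞ g` is comparable to `1/v` for `v ≥ 1`, hence doubling. After the
exponential damping the gap `(2N, 4N)`, `N = 4ⁿ`, matters: the tail at `2N - log 2` sees the end of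
the block `[N, 2N]` and is at least of order `N⁻² exp (-2βN)`, while the tail at `2N` sees only
`u ≥ 4N` and is at most of order `N⁻¹ exp (-4βN)`.
-/

open MeasureTheory Set

/-! ### The logarithmic coordinate -/

/-- The coordinate `log (e / (1 - r))` on `(-∞, 1)`, normalized so that `[0, 1)` corresponds to
`[1, ∞)`. -/
noncomputable def logCoord (r : ℝ) : ℝ := 1 - Real.log (1 - r)

/-- The function on `(-∞, 1)` whose integrals are those of `g` in the coordinate `logCoord`; the
factor `(1 - r)⁻¹` is the derivative of `logCoord`. -/
noncomputable def logLift (g : ℝ → ℝ) (r : ℝ) : ℝ := (1 - r)⁻¹ * g (logCoord r)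

/-- The density `g` damped exponentially; in the coordinate `logCoord` this is multiplication by a
power of `1 - r`. -/
noncomputable def expDamped (β : ℝ) (g : ℝ → ℝ) (u : ℝ) : ℝ := g u * Real.exp (β * (1 - u))

@[simp]
lemma logCoord_zero : logCoord 0 = 1 := by simp [logCoord]

@[simp]
lemma logCoord_one_sub_exp (u : ℝ) : logCoord (1 - Real.exp (1 - u)) = u := by simp [logCoord]

lemma strictMonoOn_logCoord : StrictMonoOn logCoord (Iio 1) := fun _ _ _ hs hrs =>
  sub_lt_sub_left (Real.log_lt_log (sub_pos.2 hs) (sub_lt_sub_left hrs 1)) 1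

lemma hasDerivAt_logCoord {r : ℝ} (hr : r < 1) : HasDerivAt logCoord (1 - r)⁻¹ r := by
  have h := (((hasDerivAt_id r).const_sub 1).log (sub_pos.2 hr).ne').const_sub 1
  exact h.congr_deriv (by simp [neg_div])

lemma image_logCoord_Ico {r : ℝ} (hr : r < 1) : logCoord '' Ico r 1 = Ici (logCoord r) := by
  refine Subset.antisymm ?_ fun u hu => ?_
  · rintro _ ⟨s, hs, rfl⟩
    exact strictMonoOn_logCoord.monotoneOn hr hs.2 hs.1
  · have hlt : 1 - Real.exp (1 - u) < 1 := sub_lt_self 1 (Real.exp_pos _)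
    refine ⟨1 - Real.exp (1 - u), ⟨?_, hlt⟩, logCoord_one_sub_exp u⟩
    rwa [← strictMonoOn_logCoord.le_iff_le hr hlt, logCoord_one_sub_exp]

lemma logCoord_midpoint {r : ℝ} (hr : r < 1) :
    logCoord ((1 + r) / 2) = logCoord r + Real.log 2 := by
  rw [logCoord, show 1 - (1 + r) / 2 = (1 - r) / 2 by ring,
    Real.log_div (sub_pos.2 hr).ne' two_ne_zero, logCoord]
  ring

lemma forall_mem_Ico_logCoord {p : ℝ → Prop} :
    (∀ r ∈ Ico (0 : ℝ) 1, p (logCoord r)) ↔ ∀ u ∈ Ici (1 : ℝ), p u := by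
  have himage : logCoord '' Ico 0 1 = Ici 1 := by rw [image_logCoord_Ico one_pos, logCoord_zero]
  rw [← himage, forall_mem_image]

lemma tailInt_logLift (g : ℝ → ℝ) {r : ℝ} (hr : r < 1) :
    tailInt (logLift g) r = ∫ u in Ioi (logCoord r), g u := by
  rw [tailInt, intervalIntegral.integral_of_le hr.le, integral_Ioc_eq_integral_Ioo,
    ← integral_Ico_eq_integral_Ioo, ← integral_Ici_eq_integral_Ioi, ← image_logCoord_Ico hr]
  exact (integral_image_eq_integral_deriv_smul_of_monotoneOn measurableSet_Ico
    (fun s hs => (hasDerivAt_logCoord hs.2).hasDerivWithinAt)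
    (strictMonoOn_logCoord.monotoneOn.mono fun _ hs => hs.2) g).symm

lemma integrableOn_logLift_iff (g : ℝ → ℝ) {r : ℝ} (hr : r < 1) :
    IntegrableOn (logLift g) (Ico r 1) ↔ IntegrableOn g (Ici (logCoord r)) := by
  rw [← image_logCoord_Ico hr]
  exact (integrableOn_image_iff_integrableOn_deriv_smul_of_monotoneOn measurableSet_Ico
    (fun s hs => (hasDerivAt_logCoord hs.2).hasDerivWithinAt)
    (strictMonoOn_logCoord.monotoneOn.mono fun _ hs => hs.2) g).symm

lemma logLift_mul_rpow (β : ℝ) (g : ℝ → ℝ) {r : ℝ} (hr : r < 1) :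
    logLift g r * (1 - r) ^ β = logLift (expDamped β g) r := by
  have hexp : Real.exp (β * (1 - logCoord r)) = (1 - r) ^ β := by
    rw [logCoord, sub_sub_cancel, mul_comm, ← Real.rpow_def_of_pos (sub_pos.2 hr)]
  rw [logLift, logLift, expDamped, hexp, mul_assoc]

/-! ### Radial weights in the logarithmic coordinate -/

lemma dhat_congr {ω ω' : ℝ → ℝ} (h : EqOn ω ω' (Ico 0 1)) : Dhat ω ↔ Dhat ω' := by
  have htail {r : ℝ} (hr : r ∈ Ico (0 : ℝ) 1) : tailInt ω r = tailInt ω' r :=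
    intervalIntegral.integral_congr_Ioo_of_le hr.2.le
      fun s hs => h ⟨hr.1.trans hs.1.le, hs.2⟩
  refine exists_congr fun C => and_congr_right fun _ => forall₂_congr fun r hr => ?_
  have hmid : (1 + r) / 2 ∈ Ico (0 : ℝ) 1 := ⟨by linarith [hr.1], by linarith [hr.2]⟩
  rw [htail hr, htail hmid]

lemma radialWeight_logLift_iff (g : ℝ → ℝ) :
    RadialWeight (logLift g) ↔ (∀ u ∈ Ici (1 : ℝ), 0 ≤ g u) ∧ IntegrableOn g (Ici 1) ∧
      ∀ v ∈ Ici (1 : ℝ), 0 < ∫ u in Ioi v, g u := by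
  rw [RadialWeight, integrableOn_logLift_iff g one_pos, logCoord_zero,
    ← forall_mem_Ico_logCoord (p := fun u => 0 ≤ g u), ← forall_mem_Ico_logCoord]
  refine and_congr (forall₂_congr fun r hr => ?_)
    (and_congr_right fun _ => forall₂_congr fun r hr => ?_)
  · exact mul_nonneg_iff_of_pos_left (inv_pos.2 (sub_pos.2 hr.2))
  · rw [tailInt_logLift g hr.2]

lemma dhat_logLift_iff (g : ℝ → ℝ) :
    Dhat (logLift g) ↔ ∃ C : ℝ, 1 ≤ C ∧
      ∀ v ∈ Ici (1 : ℝ), ∫ u in Ioi v, g u ≤ C * ∫ u in Ioi (v + Real.log 2), g u := by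
  refine exists_congr fun C => and_congr_right fun _ => ?_
  rw [← forall_mem_Ico_logCoord]
  refine forall₂_congr fun r hr => ?_
  rw [tailInt_logLift g hr.2, tailInt_logLift g (by linarith [hr.2]), logCoord_midpoint hr.2]

/-! ### Exponential damping and gaps -/

section ExpDamped

variable {β v a b : ℝ} {g : ℝ → ℝ}

lemma integrableOn_Ioi_expDamped (hβ : 0 ≤ β) (hg : IntegrableOn g (Ioi v)) :
    IntegrableOn (expDamped β g) (Ioi v) := by
  refine hg.mul_bdd (c := Real.exp (β * (1 - v))) (by fun_prop)
    (ae_restrict_of_forall_mem measurableSet_Ioi fun u hu => ?_)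
  rw [Real.norm_of_nonneg (Real.exp_pos _).le]
  have : v ≤ u := (mem_Ioi.1 hu).le
  gcongr

lemma exp_mul_setIntegral_Ioc_le_setIntegral_Ioi_expDamped (hβ : 0 ≤ β)
    (hg : IntegrableOn g (Ioi v)) (hg_nonneg : ∀ u ∈ Ioi v, 0 ≤ g u) :
    Real.exp (β * (1 - a)) * ∫ u in Ioc v a, g u ≤ ∫ u in Ioi v, expDamped β g u := by
  have hdamped := integrableOn_Ioi_expDamped hβ hg
  calc Real.exp (β * (1 - a)) * ∫ u in Ioc v a, g u
      = ∫ u in Ioc v a, g u * Real.exp (β * (1 - a)) := by rw [integral_mul_const, mul_comm]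
    _ ≤ ∫ u in Ioc v a, expDamped β g u := by
        refine setIntegral_mono_on ((hg.mono_set Ioc_subset_Ioi_self).mul_const _)
          (hdamped.mono_set Ioc_subset_Ioi_self) measurableSet_Ioc fun u hu => ?_
        have := hg_nonneg u hu.1
        have : u ≤ a := hu.2
        rw [expDamped]
        gcongr
    _ ≤ ∫ u in Ioi v, expDamped β g u :=
        setIntegral_mono_set hdamped
          (ae_restrict_of_forall_mem measurableSet_Ioi fun u hu =>
            mul_nonneg (hg_nonneg u hu) (Real.exp_pos _).le)
          Ioc_subset_Ioi_self.eventuallyLE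

lemma setIntegral_Ioi_expDamped_le (hβ : 0 ≤ β) (hg : IntegrableOn g (Ioi a))
    (hg_nonneg : ∀ u ∈ Ioi a, 0 ≤ g u) (hgap : ∀ u ∈ Ioo a b, g u = 0) :
    ∫ u in Ioi a, expDamped β g u ≤ Real.exp (β * (1 - b)) * ∫ u in Ioi a, g u := by
  rw [mul_comm, ← integral_mul_const]
  refine setIntegral_mono_on (integrableOn_Ioi_expDamped hβ hg) (hg.mul_const _)
    measurableSet_Ioi fun u hu => ?_
  rw [expDamped]
  rcases lt_or_ge u b with hub | hbu
  · simp [hgap u ⟨hu, hub⟩]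
  · have := hg_nonneg u hu
    gcongr

lemma exists_exp_gap_bound_of_dhat_mul_rpow (hβ : 0 ≤ β) (hg : IntegrableOn g (Ici 1))
    (hg_nonneg : ∀ u ∈ Ici (1 : ℝ), 0 ≤ g u)
    (hdhat : Dhat fun r => logLift g r * (1 - r) ^ β) :
    ∃ C : ℝ, 0 ≤ C ∧ ∀ a b : ℝ, 1 + Real.log 2 ≤ a → (∀ u ∈ Ioo a b, g u = 0) →
      Real.exp (β * (b - a)) * ∫ u in Ioc (a - Real.log 2) a, g u
        ≤ C * ∫ u in Ioi a, g u := by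
  rw [dhat_congr fun r hr => logLift_mul_rpow β g hr.2, dhat_logLift_iff] at hdhat
  obtain ⟨C, hC, hdoubling⟩ := hdhat
  refine ⟨C, by linarith, fun a b ha hgap => ?_⟩
  have hlog := Real.log_pos one_lt_two
  have hsub {v : ℝ} (hv : 1 ≤ v) : Ioi v ⊆ Ici 1 := fun u hu => hv.trans (mem_Ioi.1 hu).le
  have hv : 1 ≤ a - Real.log 2 := by linarith
  have ha' : 1 ≤ a := by linarith
  refine le_of_mul_le_mul_left ?_ (Real.exp_pos (β * (1 - b)))
  calc Real.exp (β * (1 - b)) * (Real.exp (β * (b - a)) * ∫ u in Ioc (a - Real.log 2) a, g u)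
      = Real.exp (β * (1 - a)) * ∫ u in Ioc (a - Real.log 2) a, g u := by
        rw [← mul_assoc, ← Real.exp_add]
        ring_nf
    _ ≤ ∫ u in Ioi (a - Real.log 2), expDamped β g u :=
        exp_mul_setIntegral_Ioc_le_setIntegral_Ioi_expDamped hβ (hg.mono_set (hsub hv))
          fun u hu => hg_nonneg u (hsub hv hu)
    _ ≤ C * ∫ u in Ioi a, expDamped β g u := by
        simpa only [sub_add_cancel] using hdoubling (a - Real.log 2) hv
    _ ≤ C * (Real.exp (β * (1 - b)) * ∫ u in Ioi a, g u) := by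
        gcongr
        exact setIntegral_Ioi_expDamped_le hβ (hg.mono_set (hsub ha'))
          (fun u hu => hg_nonneg u (hsub ha' hu)) hgap
    _ = Real.exp (β * (1 - b)) * (C * ∫ u in Ioi a, g u) := by ring

end ExpDamped

/-! ### The block density -/

/-- The union of the blocks `[4ⁿ, 2·4ⁿ]`, separated by the gaps `(2·4ⁿ, 4·4ⁿ)`. -/
def blocks : Set ℝ := ⋃ n : ℕ, Icc ((4 : ℝ) ^ n) (2 * 4 ^ n)

/-- The density `u⁻²` restricted to the blocks; its lift to `[0, 1)` is the weight of the
counterexample. -/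
noncomputable def blockDensity : ℝ → ℝ := blocks.indicator fun u => u ^ (-2 : ℝ)

lemma log_two_lt_one : Real.log 2 < 1 := Real.log_two_lt_d9.trans (by norm_num)

lemma Icc_subset_blocks (n : ℕ) : Icc ((4 : ℝ) ^ n) (2 * 4 ^ n) ⊆ blocks :=
  subset_iUnion (fun n : ℕ => Icc ((4 : ℝ) ^ n) (2 * 4 ^ n)) n

lemma measurableSet_blocks : MeasurableSet blocks :=
  MeasurableSet.iUnion fun _ => measurableSet_Icc

lemma notMem_blocks_of_mem_Ioo {n : ℕ} {u : ℝ} (hu : u ∈ Ioo (2 * (4 : ℝ) ^ n) (4 * 4 ^ n)) :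
    u ∉ blocks := by
  intro hmem
  obtain ⟨k, hk_le, hle_k⟩ := mem_iUnion.1 hmem
  have hkn : k < n + 1 := by
    rw [← pow_lt_pow_iff_right₀ (by norm_num : (1 : ℝ) < 4), pow_succ']
    exact hk_le.trans_lt hu.2
  have hnk : n < k := by
    rw [← pow_lt_pow_iff_right₀ (by norm_num : (1 : ℝ) < 4)]
    linarith [hu.1]
  omega

lemma blockDensity_nonneg {u : ℝ} (hu : 0 ≤ u) : 0 ≤ blockDensity u :=
  indicator_apply_nonneg fun _ => Real.rpow_nonneg hu _

lemma blockDensity_le {u : ℝ} (hu : 0 ≤ u) : blockDensity u ≤ u ^ (-2 : ℝ) :=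
  indicator_le_self' (fun _ _ => Real.rpow_nonneg hu _) u

lemma integrableOn_Ioi_rpow_neg_two {v : ℝ} (hv : 0 < v) :
    IntegrableOn (fun u : ℝ => u ^ (-2 : ℝ)) (Ioi v) :=
  integrableOn_Ioi_rpow_of_lt (by norm_num) hv

lemma integral_Ioi_rpow_neg_two {v : ℝ} (hv : 0 < v) : ∫ u in Ioi v, u ^ (-2 : ℝ) = v⁻¹ := by
  rw [integral_Ioi_rpow_of_lt (by norm_num) hv]
  norm_num [Real.rpow_neg_one]

lemma integrableOn_Ioi_blockDensity {v : ℝ} (hv : 0 < v) : IntegrableOn blockDensity (Ioi v) :=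
  (integrableOn_Ioi_rpow_neg_two hv).indicator measurableSet_blocks

lemma integrableOn_Ici_blockDensity {v : ℝ} (hv : 0 < v) : IntegrableOn blockDensity (Ici v) :=
  (integrableOn_Ici_iff_integrableOn_Ioi (by simp)).2 (integrableOn_Ioi_blockDensity hv)

lemma setIntegral_Ioi_blockDensity_le {v : ℝ} (hv : 0 < v) :
    ∫ u in Ioi v, blockDensity u ≤ v⁻¹ := by
  rw [← integral_Ioi_rpow_neg_two hv]
  exact setIntegral_mono_on (integrableOn_Ioi_blockDensity hv) (integrableOn_Ioi_rpow_neg_two hv)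
    measurableSet_Ioi fun u hu => blockDensity_le (hv.trans hu).le

lemma setIntegral_Ioc_blockDensity {a b : ℝ} (ha : 0 < a) (hab : a ≤ b)
    (hblocks : Ioc a b ⊆ blocks) : ∫ u in Ioc a b, blockDensity u = a⁻¹ - b⁻¹ := by
  rw [blockDensity,
    setIntegral_congr_fun measurableSet_Ioc fun u hu => indicator_of_mem (hblocks hu) _,
    ← intervalIntegral.integral_of_le hab,
    ← intervalIntegral.integral_Ioi_sub_Ioi (integrableOn_Ioi_rpow_neg_two ha) hab,
    integral_Ioi_rpow_neg_two ha, integral_Ioi_rpow_neg_two (ha.trans_le hab)]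

lemma le_setIntegral_Ioi_blockDensity {v : ℝ} (hv : 1 ≤ v) :
    (8 * v)⁻¹ ≤ ∫ u in Ioi v, blockDensity u := by
  obtain ⟨n, hn_le, hlt⟩ := exists_nat_pow_near hv (by norm_num : (1 : ℝ) < 4)
  -- `[M, 2M]` is the first block lying entirely to the right of `v`.
  set M : ℝ := 4 ^ (n + 1) with hM
  have hM_le : M ≤ 4 * v := by
    rw [hM, pow_succ']
    gcongr
  have hM_pos : 0 < M := by positivity
  calc (8 * v)⁻¹ ≤ (2 * M)⁻¹ := inv_anti₀ (by positivity) (by linarith)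
    _ = M⁻¹ - (2 * M)⁻¹ := by
        field_simp
        norm_num
    _ = ∫ u in Ioc M (2 * M), blockDensity u :=
        (setIntegral_Ioc_blockDensity hM_pos (by linarith)
          (Ioc_subset_Icc_self.trans (Icc_subset_blocks (n + 1)))).symm
    _ ≤ ∫ u in Ioi v, blockDensity u :=
        setIntegral_mono_set (integrableOn_Ioi_blockDensity (by linarith))
          (ae_restrict_of_forall_mem measurableSet_Ioi fun u hu =>
            blockDensity_nonneg (by linarith [mem_Ioi.1 hu]))
          (Ioc_subset_Ioi_self.trans (Ioi_subset_Ioi hlt.le)).eventuallyLE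

lemma log_two_div_sq_le_setIntegral_blockDensity (n : ℕ) :
    Real.log 2 / (2 * 4 ^ n) ^ 2
      ≤ ∫ u in Ioc (2 * (4 : ℝ) ^ n - Real.log 2) (2 * 4 ^ n), blockDensity u := by
  have hN : (1 : ℝ) ≤ 4 ^ n := one_le_pow₀ (by norm_num)
  have hlog_pos := Real.log_pos one_lt_two
  have hlog_lt := log_two_lt_one
  have hblocks : Ioc (2 * (4 : ℝ) ^ n - Real.log 2) (2 * 4 ^ n) ⊆ blocks :=
    fun u hu => Icc_subset_blocks n ⟨by linarith [hu.1], hu.2⟩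
  have hpos : 0 < 2 * (4 : ℝ) ^ n - Real.log 2 := by linarith
  rw [setIntegral_Ioc_blockDensity hpos (by linarith) hblocks,
    inv_sub_inv hpos.ne' (by positivity), sub_sub_cancel, sq]
  gcongr
  linarith

/-! ### The counterexample -/

lemma radialWeight_logLift_blockDensity : RadialWeight (logLift blockDensity) := by
  refine (radialWeight_logLift_iff _).2 ⟨fun u hu => blockDensity_nonneg (zero_le_one.trans hu),
    integrableOn_Ici_blockDensity one_pos, fun v hv => ?_⟩
  have hv_pos : 0 < v := one_pos.trans_le hv
  exact lt_of_lt_of_le (by positivity) (le_setIntegral_Ioi_blockDensity hv)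

lemma dhat_logLift_blockDensity : Dhat (logLift blockDensity) := by
  refine (dhat_logLift_iff _).2 ⟨16, by norm_num, fun v (hv : 1 ≤ v) => ?_⟩
  have hlog_pos := Real.log_pos one_lt_two
  have hlog_lt := log_two_lt_one
  calc ∫ u in Ioi v, blockDensity u ≤ v⁻¹ := setIntegral_Ioi_blockDensity_le (by linarith)
    _ = 16 * (8 * (v + v))⁻¹ := by
        field_simp
        norm_num
    _ ≤ 16 * (8 * (v + Real.log 2))⁻¹ := by
        gcongr
        linarith
    _ ≤ 16 * ∫ u in Ioi (v + Real.log 2), blockDensity u := by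
        gcongr
        exact le_setIntegral_Ioi_blockDensity (by linarith)

lemma not_dhat_logLift_blockDensity_mul_rpow {β : ℝ} (hβ : 0 < β) :
    ¬ Dhat (fun r => logLift blockDensity r * (1 - r) ^ β) := by
  intro hdhat
  obtain ⟨C, hC, hbound⟩ := exists_exp_gap_bound_of_dhat_mul_rpow hβ.le
    (integrableOn_Ici_blockDensity one_pos) (fun _ hu => blockDensity_nonneg (zero_le_one.trans hu))
    hdhat
  have hlog_pos := Real.log_pos one_lt_two
  have hlog_lt := log_two_lt_one
  have hexp_le (n : ℕ) : Real.exp (β * (2 * 4 ^ n)) / (2 * 4 ^ n) ≤ C / Real.log 2 := by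
    have hN : (1 : ℝ) ≤ 4 ^ n := one_le_pow₀ (by norm_num)
    have hgap : ∀ u ∈ Ioo (2 * (4 : ℝ) ^ n) (4 * 4 ^ n), blockDensity u = 0 :=
      fun u hu => indicator_of_notMem (notMem_blocks_of_mem_Ioo hu) _
    have hlower := log_two_div_sq_le_setIntegral_blockDensity n
    have hupper := setIntegral_Ioi_blockDensity_le (v := 2 * (4 : ℝ) ^ n) (by positivity)
    have h : Real.exp (β * (4 * 4 ^ n - 2 * 4 ^ n)) * (Real.log 2 / (2 * 4 ^ n) ^ 2)
        ≤ C * (2 * 4 ^ n)⁻¹ := by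
      grw [hlower, hbound _ _ (by linarith) hgap, hupper]
    rw [show (4 : ℝ) * 4 ^ n - 2 * 4 ^ n = 2 * 4 ^ n by ring] at h
    set x : ℝ := 2 * 4 ^ n
    have hx : 0 < x := by positivity
    field_simp at h ⊢
    linarith
  have hatTop : Filter.Tendsto (fun n : ℕ => 2 * (4 : ℝ) ^ n) .atTop .atTop :=
    (tendsto_pow_atTop_atTop_of_one_lt (by norm_num)).const_mul_atTop two_pos
  have hexp_atTop := (tendsto_exp_mul_div_rpow_atTop 1 β hβ).comp hatTop
  obtain ⟨n, hn⟩ := (hexp_atTop.eventually_gt_atTop (C / Real.log 2)).exists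
  exact (hexp_le n).not_gt (by simpa only [Function.comp_apply, Real.rpow_one] using hn)

theorem statement12_general :
    ∃ ω : ℝ → ℝ, RadialWeight ω ∧ Dhat ω ∧
      ∀ β : ℝ, 0 < β → ¬ Dhat (fun r => ω r * (1 - r) ^ β) :=
  ⟨logLift blockDensity, radialWeight_logLift_blockDensity, dhat_logLift_blockDensity,
    fun _ => not_dhat_logLift_blockDensity_mul_rpow⟩

/-- For each `β > 0` there is a radial weight `ω ∈ D̂` such that
`ω_{[β]}(r) = ω(r)(1−r)^β` does not belong to `D̂`. -/
theorem statement12 (β : ℝ) (hβ : 0 < β) :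
    ∃ ω : ℝ → ℝ, RadialWeight ω ∧ Dhat ω ∧
      ¬ Dhat (fun r => ω r * (1 - r) ^ β) :=
  let ⟨ω, hω, hdhat, hnot⟩ := statement12_general
  ⟨ω, hω, hdhat, hnot β hβ⟩
end

section
/- Let ω ∈ D̂ be a radial weight such that ω̃ is a weight. Then ω̃ ∈ D̂; indeed, with C the doubling constant of ω, one has ∫_r^1 ω̃(s) ds ≤ C ∫_{(1+r)/2}^1 ω̃(u) du for all 0 ≤ r < 1 (up to an absolute multiplicative constant). -/
/-! The measure `ds / (1 - s)` is invariant under the contractions `s ↦ 1 - (1 - s) / K` towards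
the boundary point `1`; for `K = 2` this is `s ↦ (1 + s) / 2`. Hence a doubling inequality for
`ω̂` can be integrated against this measure, and passes to the tail of `ω̃` with the same
constant. -/

open MeasureTheory Set

section Contraction

variable {a b K : ℝ}

theorem intervalIntegrable_comp_contraction {E : Type*} [NormedAddCommGroup E] {f : ℝ → E}
    (hK : K ≠ 0) (hf : IntervalIntegrable f volume (b - (b - a) / K) b) :
    IntervalIntegrable (fun s ↦ f (b - (b - s) / K)) volume a b := by
  have h := ((hf.comp_sub_left b).comp_mul_left (c := K⁻¹)).comp_sub_left b
  simpa [div_eq_inv_mul, hK] using h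

theorem integral_comp_contraction {E : Type*} [NormedAddCommGroup E] [NormedSpace ℝ E]
    (f : ℝ → E) (hK : K ≠ 0) :
    ∫ s in a..b, f (b - (b - s) / K) = K • ∫ u in (b - (b - a) / K)..b, f u := by
  rw [intervalIntegral.integral_comp_sub_left (fun t ↦ f (b - t / K)) b,
    intervalIntegral.integral_comp_sub_div f hK, sub_self, zero_div, sub_zero]

theorem comp_contraction_div_sub (F : ℝ → ℝ) (hK : K ≠ 0) (s : ℝ) :
    F (b - (b - s) / K) / (b - s) =
      K⁻¹ * (F (b - (b - s) / K) / (b - (b - (b - s) / K))) := by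
  rw [sub_sub_cancel]
  field_simp

theorem intervalIntegrable_comp_contraction_div_sub {F : ℝ → ℝ} (hK : K ≠ 0)
    (hF : IntervalIntegrable (fun u ↦ F u / (b - u)) volume (b - (b - a) / K) b) :
    IntervalIntegrable (fun s ↦ F (b - (b - s) / K) / (b - s)) volume a b := by
  simp only [comp_contraction_div_sub F hK]
  exact (intervalIntegrable_comp_contraction hK hF).const_mul K⁻¹

theorem integral_comp_contraction_div_sub (F : ℝ → ℝ) (hK : K ≠ 0) :
    ∫ s in a..b, F (b - (b - s) / K) / (b - s) =
      ∫ u in (b - (b - a) / K)..b, F u / (b - u) := by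
  simp only [comp_contraction_div_sub F hK]
  rw [intervalIntegral.integral_const_mul,
    integral_comp_contraction (fun u ↦ F u / (b - u)) hK, smul_eq_mul, inv_mul_cancel_left₀ hK]

end Contraction

theorem statement14_general {F : ℝ → ℝ} {C K r : ℝ} (hK : 1 ≤ K) (hr : r ≤ 1)
    (hF : ∀ s ∈ Ioo r 1, F s ≤ C * F (1 - (1 - s) / K))
    (hint : IntegrableOn (fun s ↦ F s / (1 - s)) (Ico r 1)) :
    ∫ s in r..1, F s / (1 - s) ≤ C * ∫ u in (1 - (1 - r) / K)..1, F u / (1 - u) := by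
  have hK₀ : K ≠ 0 := (zero_lt_one.trans_le hK).ne'
  have hint_interval : IntervalIntegrable (fun s ↦ F s / (1 - s)) volume r 1 :=
    (intervalIntegrable_iff_integrableOn_Ico_of_le hr).2 hint
  have contraction_mem : 1 - (1 - r) / K ∈ uIcc r 1 := by
    have h_nonneg : 0 ≤ (1 - r) / K := div_nonneg (sub_nonneg.2 hr) (zero_le_one.trans hK)
    have h_le : (1 - r) / K ≤ 1 - r := div_le_self (sub_nonneg.2 hr) hK
    rw [uIcc_of_le hr]
    constructor <;> linarith
  have hint_contraction : IntervalIntegrable (fun s ↦ F (1 - (1 - s) / K) / (1 - s)) volume r 1 :=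
    intervalIntegrable_comp_contraction_div_sub hK₀
      (hint_interval.mono_set (uIcc_subset_uIcc_right contraction_mem))
  calc
    ∫ s in r..1, F s / (1 - s) ≤ ∫ s in r..1, C * (F (1 - (1 - s) / K) / (1 - s)) := by
      refine intervalIntegral.integral_mono_on_of_le_Ioo hr hint_interval
        (hint_contraction.const_mul C) ?_
      intro s hs
      rw [← mul_div_assoc]
      exact div_le_div_of_nonneg_right (hF s hs) (sub_nonneg.2 hs.2.le)
    _ = C * ∫ s in r..1, F (1 - (1 - s) / K) / (1 - s) := intervalIntegral.integral_const_mul _ _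
    _ = C * ∫ u in (1 - (1 - r) / K)..1, F u / (1 - u) := by
      rw [integral_comp_contraction_div_sub F hK₀]

/-- If `ω ∈ D̂` with doubling constant `C` and `ω̃` is a weight, then `ω̃ ∈ D̂`;
indeed `∫_r^1 ω̃(s) ds ≤ c · C · ∫_{(1+r)/2}^1 ω̃(u) du` for all `0 ≤ r < 1`, where `c > 0`
is an absolute constant. -/
theorem statement14 :
    ∃ c : ℝ, 0 < c ∧ ∀ ω : ℝ → ℝ, ∀ C : ℝ, RadialWeight ω → 1 ≤ C →
      (∀ r ∈ Set.Ico (0:ℝ) 1, tailInt ω r ≤ C * tailInt ω ((1 + r) / 2)) →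
      MeasureTheory.IntegrableOn (assocW ω) (Set.Ico 0 1) →
      ∀ r ∈ Set.Ico (0:ℝ) 1,
        tailInt (assocW ω) r ≤ c * C * tailInt (assocW ω) ((1 + r) / 2) := by
  refine ⟨1, one_pos, fun ω C _ _ hdoubling hint r hr ↦ ?_⟩
  have midpoint_eq (s : ℝ) : (1 + s) / 2 = 1 - (1 - s) / 2 := by ring
  simp only [midpoint_eq, one_mul] at hdoubling ⊢
  exact statement14_general one_le_two hr.2.le
    (fun s hs ↦ hdoubling s ⟨hr.1.trans hs.1.le, hs.2⟩) (hint.mono_set (Ico_subset_Ico_left hr.1))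
end

section
/- Let ω ∈ D = D̂ ∩ Ď be a radial weight. Then ω̃ is a weight and ω̂(r) ≍ ∫_r^1 ω̃(s) ds for all 0 ≤ r < 1; that is, there exists a constant c ≥ 1 depending only on ω such that c^{-1} ω̂(r) ≤ ∫_r^1 ω̂(s)/(1−s) ds ≤ c ω̂(r) for all 0 ≤ r < 1. -/
/-!
Iterating the `Ď` inequality `C ω̂(1 - (1 - r)/K) ≤ ω̂(r)` and filling the gaps between consecutive
iterates by monotonicity gives the power decay `ω̂(s) ≤ C ((1 - s)/(1 - r)) ^ β ω̂(r)` for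
`r ≤ s < 1`, with `β = log C / log K > 0`. Hence `ω̃(s)` is dominated by a multiple of the
integrable function `(1 - s) ^ (β - 1)`, and integrating over `[r, 1)` yields the upper estimate
with constant `C / β`. For the lower estimate it suffices to integrate `ω̃` over `[r, (1 + r)/2]`,
where it is at least `ω̂((1 + r)/2)/(1 - r)`, which `D̂` compares with `ω̂(r)/(1 - r)`.
-/

open MeasureTheory Set

section GeometricDecay

variable {g : ℝ → ℝ} {b K C : ℝ}

lemma pow_mul_apply_div_pow_le (hK : 1 ≤ K) (hC : 0 ≤ C)
    (h : ∀ t ∈ Ioc 0 b, C * g (t / K) ≤ g t) (n : ℕ) {u : ℝ} (hu : u ∈ Ioc 0 b) :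
    C ^ n * g (u / K ^ n) ≤ g u := by
  induction n with
  | zero => simp
  | succ n ih =>
    have hpow : 1 ≤ K ^ n := one_le_pow₀ hK
    have hmem : u / K ^ n ∈ Ioc 0 b :=
      ⟨div_pos hu.1 (by linarith), (div_le_self hu.1.le hpow).trans hu.2⟩
    calc C ^ (n + 1) * g (u / K ^ (n + 1)) = C ^ n * (C * g (u / K ^ n / K)) := by
          rw [pow_succ, pow_succ, div_div, mul_assoc]
      _ ≤ C ^ n * g (u / K ^ n) := by gcongr; exact h _ hmem
      _ ≤ g u := ih

lemma apply_le_mul_rpow_logb_mul (hg : MonotoneOn g (Ioc 0 b)) (hK : 1 < K) (hC : 1 ≤ C)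
    (h : ∀ t ∈ Ioc 0 b, C * g (t / K) ≤ g t) {t u : ℝ} (ht : 0 < t) (htu : t ≤ u) (hub : u ≤ b)
    (hgu : 0 ≤ g u) : g t ≤ C * (t / u) ^ Real.logb K C * g u := by
  have hK₀ : 0 < K := by linarith
  have hC₀ : 0 < C := by linarith
  have hu : 0 < u := ht.trans_le htu
  obtain ⟨n, hn, hn'⟩ := exists_nat_pow_near ((one_le_div ht).2 htu) hK
  have hle : t ≤ u / K ^ n := (le_div_comm₀ (by positivity) ht).1 hn
  have hdecay : C ^ n * g t ≤ g u := by
    refine le_trans ?_ (pow_mul_apply_div_pow_le hK.le hC₀.le h n ⟨hu, hub⟩)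
    have hleb : u / K ^ n ≤ b := (div_le_self hu.le (one_le_pow₀ hK.le)).trans hub
    gcongr
    exact hg ⟨ht, htu.trans hub⟩ ⟨by positivity, hleb⟩ hle
  have hratio : 1 ≤ C ^ (n + 1) * (t / u) ^ Real.logb K C := by
    have hbase : 1 ≤ K ^ (n + 1) * (t / u) := by
      rw [← inv_div u t, ← div_eq_mul_inv]
      exact (one_le_div (by positivity)).2 hn'.le
    calc 1 ≤ (K ^ (n + 1) * (t / u)) ^ Real.logb K C :=
          Real.one_le_rpow hbase (Real.logb_nonneg hK hC)
      _ = C ^ (n + 1) * (t / u) ^ Real.logb K C := by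
          rw [Real.mul_rpow (by positivity) (by positivity), ← Real.rpow_pow_comm hK₀.le,
            Real.rpow_logb hK₀ hK.ne' hC₀]
  refine le_of_mul_le_mul_left ?_ (pow_pos hC₀ n)
  calc C ^ n * g t ≤ 1 * g u := by rwa [one_mul]
    _ ≤ C ^ (n + 1) * (t / u) ^ Real.logb K C * g u := by gcongr
    _ = C ^ n * (C * (t / u) ^ Real.logb K C * g u) := by ring

end GeometricDecay

section OneSubRpow

variable {p : ℝ}

lemma intervalIntegrable_one_sub_rpow (hp : -1 < p) (a b : ℝ) :
    IntervalIntegrable (fun s : ℝ ↦ (1 - s) ^ p) volume a b := by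
  simpa using (intervalIntegral.intervalIntegrable_rpow' (a := 1 - a) (b := 1 - b)
    hp).comp_sub_left 1

lemma integral_one_sub_rpow (hp : -1 < p) (r : ℝ) :
    ∫ s in r..1, (1 - s) ^ p = (1 - r) ^ (p + 1) / (p + 1) := by
  rw [intervalIntegral.integral_comp_sub_left (fun t : ℝ ↦ t ^ p), integral_rpow (.inl hp),
    sub_self, Real.zero_rpow (by linarith), sub_zero]

end OneSubRpow

lemma intervalIntegrable_of_integrableOn_Ico_s15 {f : ℝ → ℝ} {a b c d : ℝ}
    (hf : IntegrableOn f (Ico c d)) (hca : c ≤ a) (hab : a ≤ b) (hbd : b ≤ d) :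
    IntervalIntegrable f volume a b :=
  (intervalIntegrable_iff_integrableOn_Ico_of_le hab).2 (hf.mono_set (Ico_subset_Ico hca hbd))

section AssociatedWeight

variable {ω : ℝ → ℝ}

lemma integral_le_tailInt {r a b : ℝ} (h₀ : ∀ s ∈ Ico r 1, 0 ≤ ω s)
    (hω : IntegrableOn ω (Ico r 1)) (hra : r ≤ a) (hab : a ≤ b) (hb : b ≤ 1) :
    ∫ s in a..b, ω s ≤ tailInt ω r := by
  refine intervalIntegral.integral_mono_interval hra hab hb ?_
    (intervalIntegrable_of_integrableOn_Ico_s15 hω le_rfl (hra.trans (hab.trans hb)) le_rfl)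
  rw [← restrict_Ico_eq_restrict_Ioc]
  exact ae_restrict_of_forall_mem measurableSet_Ico h₀

lemma RadialWeight.antitoneOn_tailInt_s15 (hω : RadialWeight ω) :
    AntitoneOn (tailInt ω) (Ico 0 1) :=
  fun _ hr _ hs hrs ↦ integral_le_tailInt (fun _ ht ↦ hω.1 _ ⟨hr.1.trans ht.1, ht.2⟩)
    (hω.2.1.mono_set (Ico_subset_Ico_left hr.1)) hrs hs.2.le le_rfl

lemma RadialWeight.assocW_pos (hω : RadialWeight ω) {s : ℝ} (hs : s ∈ Ico (0 : ℝ) 1) :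
    0 < assocW ω s :=
  div_pos (hω.2.2 s hs) (sub_pos.2 hs.2)

lemma RadialWeight.aestronglyMeasurable_assocW (hω : RadialWeight ω) :
    AEStronglyMeasurable (assocW ω) (volume.restrict (Ico 0 1)) :=
  ((aemeasurable_restrict_of_antitoneOn measurableSet_Ico hω.antitoneOn_tailInt_s15).div
    (by fun_prop)).aestronglyMeasurable

lemma RadialWeight.mul_tailInt_le_tailInt_assocW (hω : RadialWeight ω)
    (hi : IntegrableOn (assocW ω) (Ico 0 1)) {r m : ℝ} (hr : 0 ≤ r) (hrm : r ≤ m) (hm : m < 1) :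
    (m - r) / (1 - r) * tailInt ω m ≤ tailInt (assocW ω) r := by
  have hlower : ∀ s ∈ Icc r m, tailInt ω m / (1 - r) ≤ assocW ω s := fun s hs ↦ by
    have hs' : s ∈ Ico (0 : ℝ) 1 := ⟨hr.trans hs.1, hs.2.trans_lt hm⟩
    have hanti := hω.antitoneOn_tailInt_s15 hs' ⟨hr.trans hrm, hm⟩ hs.2
    exact div_le_div₀ (hω.2.2 s hs').le hanti (sub_pos.2 hs'.2) (sub_le_sub_left hs.1 1)
  calc (m - r) / (1 - r) * tailInt ω m = ∫ _ in r..m, tailInt ω m / (1 - r) := by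
        rw [intervalIntegral.integral_const, smul_eq_mul, div_mul_eq_mul_div, mul_div_assoc]
    _ ≤ ∫ s in r..m, assocW ω s :=
        intervalIntegral.integral_mono_on hrm intervalIntegrable_const
          (intervalIntegrable_of_integrableOn_Ico_s15 hi hr hrm hm.le) hlower
    _ ≤ tailInt (assocW ω) r :=
        integral_le_tailInt (fun _ hs ↦ (hω.assocW_pos ⟨hr.trans hs.1, hs.2⟩).le)
          (hi.mono_set (Ico_subset_Ico_left hr)) le_rfl hrm hm.le

lemma RadialWeight.half_tailInt_le_tailInt_assocW (hω : RadialWeight ω)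
    (hi : IntegrableOn (assocW ω) (Ico 0 1)) {r : ℝ} (hr : r ∈ Ico (0 : ℝ) 1) :
    tailInt ω ((1 + r) / 2) / 2 ≤ tailInt (assocW ω) r := by
  have hr1 : 0 < 1 - r := sub_pos.2 hr.2
  have hratio : ((1 + r) / 2 - r) / (1 - r) = 1 / 2 := by field_simp; ring
  have hle := hω.mul_tailInt_le_tailInt_assocW hi hr.1 (m := (1 + r) / 2)
    (by linarith) (by linarith)
  rwa [hratio, one_div_mul_eq_div] at hle

lemma RadialWeight.radialWeight_assocW (hω : RadialWeight ω)
    (hi : IntegrableOn (assocW ω) (Ico 0 1)) : RadialWeight (assocW ω) := by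
  refine ⟨fun s hs ↦ (hω.assocW_pos hs).le, hi, fun r hr ↦ ?_⟩
  have hmid : (1 + r) / 2 ∈ Ico (0 : ℝ) 1 := ⟨by linarith [hr.1], by linarith [hr.2]⟩
  exact (half_pos (hω.2.2 _ hmid)).trans_le (hω.half_tailInt_le_tailInt_assocW hi hr)

lemma Dhat.exists_tailInt_le_tailInt_assocW (h : Dhat ω) (hω : RadialWeight ω)
    (hi : IntegrableOn (assocW ω) (Ico 0 1)) :
    ∃ c, ∀ r ∈ Ico (0 : ℝ) 1, tailInt ω r ≤ c * tailInt (assocW ω) r := by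
  obtain ⟨C, hC, hdouble⟩ := h
  refine ⟨C * 2, fun r hr ↦ ?_⟩
  calc tailInt ω r ≤ C * 2 * (tailInt ω ((1 + r) / 2) / 2) := by linarith [hdouble r hr]
    _ ≤ C * 2 * tailInt (assocW ω) r := by
        gcongr
        exact hω.half_tailInt_le_tailInt_assocW hi hr

lemma Dcheck.exists_tailInt_le_rpow (h : Dcheck ω) (hω : RadialWeight ω) :
    ∃ C β : ℝ, 0 < β ∧ ∀ r s : ℝ, 0 ≤ r → r ≤ s → s < 1 →
      tailInt ω s ≤ C * ((1 - s) / (1 - r)) ^ β * tailInt ω r := by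
  obtain ⟨K, C, hK, hC, hcheck⟩ := h
  refine ⟨C, Real.logb K C, Real.logb_pos hK hC, fun r s hr hrs hs ↦ ?_⟩
  have hmem : ∀ t ∈ Ioc (0 : ℝ) 1, 1 - t ∈ Ico (0 : ℝ) 1 := fun t ht ↦
    ⟨sub_nonneg.2 ht.2, sub_lt_self 1 ht.1⟩
  have hmono : MonotoneOn (fun t ↦ tailInt ω (1 - t)) (Ioc 0 1) := fun t ht u hu htu ↦
    hω.antitoneOn_tailInt_s15 (hmem u hu) (hmem t ht) (sub_le_sub_left htu 1)
  have hcontract : ∀ t ∈ Ioc (0 : ℝ) 1, C * tailInt ω (1 - t / K) ≤ tailInt ω (1 - t) :=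
    fun t ht ↦ by simpa only [sub_sub_cancel] using hcheck (1 - t) (hmem t ht)
  have hnonneg : 0 ≤ tailInt ω r := (hω.2.2 r ⟨hr, hrs.trans_lt hs⟩).le
  simpa only [sub_sub_cancel] using apply_le_mul_rpow_logb_mul hmono hK hC.le hcontract
    (sub_pos.2 hs) (sub_le_sub_left hrs 1) (sub_le_self 1 hr) (by simpa only [sub_sub_cancel])

lemma Dcheck.exists_assocW_le_rpow (h : Dcheck ω) (hω : RadialWeight ω) :
    ∃ C β : ℝ, 0 < β ∧ ∀ r s : ℝ, 0 ≤ r → r ≤ s → s < 1 →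
      assocW ω s ≤ C * tailInt ω r / (1 - r) ^ β * (1 - s) ^ (β - 1) := by
  obtain ⟨C, β, hβ, hdecay⟩ := h.exists_tailInt_le_rpow hω
  refine ⟨C, β, hβ, fun r s hr hrs hs ↦ ?_⟩
  have hs' : 0 < 1 - s := sub_pos.2 hs
  have hr' : 0 ≤ 1 - r := by linarith
  calc assocW ω s ≤ C * ((1 - s) / (1 - r)) ^ β * tailInt ω r / (1 - s) :=
        div_le_div_of_nonneg_right (hdecay r s hr hrs hs) hs'.le
    _ = C * tailInt ω r / (1 - r) ^ β * (1 - s) ^ (β - 1) := by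
        rw [Real.div_rpow hs'.le hr', Real.rpow_sub_one hs'.ne']
        ring

lemma Dcheck.integrableOn_assocW (h : Dcheck ω) (hω : RadialWeight ω) :
    IntegrableOn (assocW ω) (Ico 0 1) := by
  obtain ⟨C, β, hβ, hle⟩ := h.exists_assocW_le_rpow hω
  have hdom : IntegrableOn (fun s : ℝ ↦ (1 - s) ^ (β - 1)) (Ico 0 1) :=
    (intervalIntegrable_iff_integrableOn_Ico_of_le zero_le_one).1
      (intervalIntegrable_one_sub_rpow (by linarith) 0 1)
  refine (hdom.const_mul (C * tailInt ω 0 / (1 - 0) ^ β)).mono'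
    hω.aestronglyMeasurable_assocW ?_
  filter_upwards [ae_restrict_mem measurableSet_Ico] with s hs
  rw [Real.norm_of_nonneg (hω.assocW_pos hs).le]
  exact hle 0 s le_rfl hs.1 hs.2

lemma Dcheck.exists_tailInt_assocW_le (h : Dcheck ω) (hω : RadialWeight ω) :
    ∃ c, ∀ r ∈ Ico (0 : ℝ) 1, tailInt (assocW ω) r ≤ c * tailInt ω r := by
  obtain ⟨C, β, hβ, hle⟩ := h.exists_assocW_le_rpow hω
  refine ⟨C / β, fun r hr ↦ ?_⟩
  have hp : -1 < β - 1 := by linarith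
  have hr' : (1 - r) ^ β ≠ 0 := (Real.rpow_pos_of_pos (sub_pos.2 hr.2) β).ne'
  calc tailInt (assocW ω) r
      ≤ ∫ s in r..1, C * tailInt ω r / (1 - r) ^ β * (1 - s) ^ (β - 1) :=
        intervalIntegral.integral_mono_on_of_le_Ioo hr.2.le
          (intervalIntegrable_of_integrableOn_Ico_s15 (h.integrableOn_assocW hω) hr.1 hr.2.le le_rfl)
          ((intervalIntegrable_one_sub_rpow hp r 1).const_mul _)
          fun s hs ↦ hle r s hr.1 hs.1.le hs.2
    _ = C * tailInt ω r / (1 - r) ^ β * ((1 - r) ^ β / β) := by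
        rw [intervalIntegral.integral_const_mul, integral_one_sub_rpow hp, sub_add_cancel]
    _ = C / β * tailInt ω r := by field_simp

end AssociatedWeight

/-- If `ω ∈ D = D̂ ∩ Ď`, then `ω̃` is a weight and
`ω̂(r) ≍ ∫_r^1 ω̃(s) ds` on `[0,1)`. -/
theorem statement15 (ω : ℝ → ℝ) (hω : RadialWeight ω) (h1 : Dhat ω) (h2 : Dcheck ω) :
    MeasureTheory.IntegrableOn (assocW ω) (Set.Ico 0 1) ∧
      ∃ c : ℝ, 1 ≤ c ∧ ∀ r ∈ Set.Ico (0:ℝ) 1,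
        c⁻¹ * tailInt ω r ≤ tailInt (assocW ω) r ∧
          tailInt (assocW ω) r ≤ c * tailInt ω r := by
  have hi := h2.integrableOn_assocW hω
  have hω' := hω.radialWeight_assocW hi
  obtain ⟨c₁, hlower⟩ := h1.exists_tailInt_le_tailInt_assocW hω hi
  obtain ⟨c₂, hupper⟩ := h2.exists_tailInt_assocW_le hω
  refine ⟨hi, max 1 (max c₁ c₂), le_max_left .., fun r hr ↦ ⟨?_, ?_⟩⟩
  · rw [inv_mul_le_iff₀ (by positivity)]
    refine (hlower r hr).trans (mul_le_mul_of_nonneg_right ?_ (hω'.2.2 r hr).le)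
    exact (le_max_left c₁ c₂).trans (le_max_right ..)
  · refine (hupper r hr).trans (mul_le_mul_of_nonneg_right ?_ (hω.2.2 r hr).le)
    exact (le_max_right c₁ c₂).trans (le_max_right ..)
end

section
/- Let ψ : [1,∞) → (0,∞) be an increasing function satisfying ψ(x+1) − ψ(x) ≤ C/x for all x ≥ 1 and some constant C > 0, and let C₁ > 0. Then ∫_x^∞ 2^{−C₁ψ(y)} y^{−2} dy ≍ x^{−1} 2^{−C₁ψ(x)} for all 1 ≤ x < ∞, with comparability constants depending only on C and C₁; in particular ∫_x^∞ 2^{−C₁ψ(y)} y^{−2} dy ≤ x^{−1} 2^{−C₁ψ(x)} and ∫_x^∞ 2^{−C₁ψ(y)} y^{−2} dy ≥ 2^{−(C₁C₂+1)} x^{−1} 2^{−C₁ψ(x)} for a constant C₂ = C₂(C) > 0. -/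
/-!
Monotonicity turns the integral of an antitone weight against `y⁻²` into two evaluations of the
weight: `w(b)(1/a - 1/b) ≤ ∫_a^∞ w(y) y⁻² dy ≤ w(a)/a`. For `w = 2^{-C₁ψ}` the upper bound is the
claim, and with `b = 2a` the lower bound is the claim once `w(2a)` is compared with `w(a)`. Going
from `a` to `2a` takes at most `⌈a⌉ ≤ 2a` unit steps, each raising `ψ` by at most `C/a`, so
`ψ(2a) ≤ ψ(a) + 2C`.
-/

open MeasureTheory Set

section AntitoneWeight

variable {α : Type*} [LinearOrder α] [TopologicalSpace α] [OrderClosedTopology α]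
  [MeasurableSpace α] [BorelSpace α] {μ : Measure α} {w g : α → ℝ} {a b : α}

lemma integrableOn_Ioi_mul_of_antitoneOn (hw : AntitoneOn w (Ici a)) (hw₀ : ∀ x ∈ Ioi a, 0 ≤ w x)
    (hg : IntegrableOn g (Ioi a) μ) : IntegrableOn (fun x ↦ w x * g x) (Ioi a) μ := by
  have hmeas : AEMeasurable w (μ.restrict (Ioi a)) :=
    aemeasurable_restrict_of_antitoneOn measurableSet_Ioi (hw.mono Ioi_subset_Ici_self)
  refine Integrable.bdd_mul (c := w a) hg hmeas.aestronglyMeasurable ?_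
  filter_upwards [ae_restrict_mem measurableSet_Ioi] with x hx
  rw [Real.norm_of_nonneg (hw₀ x hx)]
  exact hw self_mem_Ici hx.le hx.le

lemma setIntegral_Ioi_mul_le_of_antitoneOn (hw : AntitoneOn w (Ici a))
    (hw₀ : ∀ x ∈ Ioi a, 0 ≤ w x) (hg₀ : ∀ x ∈ Ioi a, 0 ≤ g x) (hg : IntegrableOn g (Ioi a) μ) :
    ∫ x in Ioi a, w x * g x ∂μ ≤ w a * ∫ x in Ioi a, g x ∂μ := by
  rw [← integral_const_mul]
  exact setIntegral_mono_on (integrableOn_Ioi_mul_of_antitoneOn hw hw₀ hg) (hg.const_mul _)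
    measurableSet_Ioi fun x hx ↦
      mul_le_mul_of_nonneg_right (hw self_mem_Ici hx.le hx.le) (hg₀ x hx)

lemma mul_setIntegral_Ioc_le_of_antitoneOn (hw : AntitoneOn w (Ici a))
    (hw₀ : ∀ x ∈ Ioi a, 0 ≤ w x) (hg₀ : ∀ x ∈ Ioi a, 0 ≤ g x) (hg : IntegrableOn g (Ioi a) μ) :
    w b * ∫ x in Ioc a b, g x ∂μ ≤ ∫ x in Ioi a, w x * g x ∂μ := by
  have hwg := integrableOn_Ioi_mul_of_antitoneOn hw hw₀ hg
  have hsub : Ioc a b ⊆ Ioi a := Ioc_subset_Ioi_self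
  calc w b * ∫ x in Ioc a b, g x ∂μ
    _ = ∫ x in Ioc a b, w b * g x ∂μ := (integral_const_mul _ _).symm
    _ ≤ ∫ x in Ioc a b, w x * g x ∂μ :=
      setIntegral_mono_on ((hg.mono_set hsub).const_mul _) (hwg.mono_set hsub) measurableSet_Ioc
        fun x hx ↦ mul_le_mul_of_nonneg_right
          (hw hx.1.le (hx.1.le.trans hx.2) hx.2) (hg₀ x hx.1)
    _ ≤ ∫ x in Ioi a, w x * g x ∂μ :=
      setIntegral_mono_set hwg (ae_restrict_of_forall_mem measurableSet_Ioi fun x hx ↦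
        mul_nonneg (hw₀ x hx) (hg₀ x hx)) hsub.eventuallyLE

end AntitoneWeight

section InverseSquare

variable {a b : ℝ} {w : ℝ → ℝ}

lemma integrableOn_Ioi_zpow_of_lt {n : ℤ} (hn : n < -1) (ha : 0 < a) :
    IntegrableOn (fun y : ℝ ↦ y ^ n) (Ioi a) := by
  simpa only [Real.rpow_intCast] using
    integrableOn_Ioi_rpow_of_lt (a := n) (by exact_mod_cast hn) ha

lemma integral_Ioi_zpow_of_lt {n : ℤ} (hn : n < -1) (ha : 0 < a) :
    ∫ y in Ioi a, y ^ n = -a ^ (n + 1) / (n + 1) := by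
  exact_mod_cast integral_Ioi_rpow_of_lt (a := n) (by exact_mod_cast hn) ha

lemma integral_Ioi_div_sq_le_of_antitoneOn (ha : 0 < a) (hw : AntitoneOn w (Ici a))
    (hw₀ : ∀ y ∈ Ioi a, 0 ≤ w y) : ∫ y in Ioi a, w y / y ^ 2 ≤ w a / a := by
  calc ∫ y in Ioi a, w y / y ^ 2
    _ = ∫ y in Ioi a, w y * y ^ (-2 : ℤ) := by
      simp only [div_eq_mul_inv, zpow_neg, zpow_ofNat]
    _ ≤ w a * ∫ y in Ioi a, y ^ (-2 : ℤ) :=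
      setIntegral_Ioi_mul_le_of_antitoneOn hw hw₀ (fun y hy ↦ zpow_nonneg (ha.trans hy).le _)
        (integrableOn_Ioi_zpow_of_lt (by norm_num) ha)
    _ = w a / a := by
      rw [integral_Ioi_zpow_of_lt (by norm_num) ha]
      norm_num [div_eq_mul_inv]

lemma mul_inv_sub_inv_le_integral_Ioi_div_sq_of_antitoneOn (ha : 0 < a) (hab : a ≤ b)
    (hw : AntitoneOn w (Ici a)) (hw₀ : ∀ y ∈ Ioi a, 0 ≤ w y) :
    w b * (a⁻¹ - b⁻¹) ≤ ∫ y in Ioi a, w y / y ^ 2 := by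
  calc w b * (a⁻¹ - b⁻¹)
    _ = w b * ∫ y in Ioc a b, y ^ (-2 : ℤ) := by
      have h₀ : (0 : ℝ) ∉ uIcc a b := notMem_uIcc_of_lt ha (ha.trans_le hab)
      rw [← intervalIntegral.integral_of_le hab, integral_zpow (.inr ⟨by norm_num, h₀⟩)]
      norm_num [div_neg]
    _ ≤ ∫ y in Ioi a, w y * y ^ (-2 : ℤ) :=
      mul_setIntegral_Ioc_le_of_antitoneOn hw hw₀ (fun y hy ↦ zpow_nonneg (ha.trans hy).le _)
        (integrableOn_Ioi_zpow_of_lt (by norm_num) ha)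
    _ = ∫ y in Ioi a, w y / y ^ 2 := by
      simp only [div_eq_mul_inv, zpow_neg, zpow_ofNat]

end InverseSquare

section Growth

variable {ψ : ℝ → ℝ}

lemma apply_add_natCast_le_of_increment_le {x δ : ℝ} (hψ : ∀ y ∈ Ici x, ψ (y + 1) - ψ y ≤ δ)
    (n : ℕ) : ψ (x + n) ≤ ψ x + n * δ := by
  induction n with
  | zero => simp
  | succ n ih =>
    have hstep := hψ (x + n) (mem_Ici.2 (le_add_of_nonneg_right n.cast_nonneg))
    push_cast
    rw [← add_assoc]
    linarith

lemma apply_mul_le_add_mul_of_increment_le_div {C K x : ℝ} (hmono : MonotoneOn ψ (Ici 1))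
    (hψ : ∀ y ∈ Ici (1 : ℝ), ψ (y + 1) - ψ y ≤ C / y) (hK : 1 ≤ K) (hx : 1 ≤ x) :
    ψ (K * x) ≤ ψ x + K * C := by
  have hx₀ : 0 < x := by linarith
  have hxK : x ≤ K * x := le_mul_of_one_le_left hx₀.le hK
  set n : ℕ := ⌈(K - 1) * x⌉₊
  have hn : (K - 1) * x ≤ n := Nat.le_ceil _
  have hn_le : n ≤ K * x := by
    have hceil : (n : ℝ) < (K - 1) * x + 1 :=
      Nat.ceil_lt_add_one (mul_nonneg (sub_nonneg.2 hK) hx₀.le)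
    linarith
  have hC : 0 ≤ C := by
    have hle : ψ 1 ≤ ψ (1 + 1) := hmono self_mem_Ici (by simp) (by simp)
    have hincr₁ : ψ (1 + 1) - ψ 1 ≤ C := div_one C ▸ hψ 1 self_mem_Ici
    linarith
  have hincr : ∀ y ∈ Ici x, ψ (y + 1) - ψ y ≤ C / x := fun y hy ↦
    (hψ y (hx.trans hy)).trans (div_le_div_of_nonneg_left hC hx₀ hy)
  calc ψ (K * x)
    _ ≤ ψ (x + n) := hmono (hx.trans hxK) (by simp only [mem_Ici]; linarith) (by linarith)
    _ ≤ ψ x + n * (C / x) := apply_add_natCast_le_of_increment_le hincr n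
    _ ≤ ψ x + K * x * (C / x) := by gcongr
    _ = ψ x + K * C := by field_simp

end Growth

lemma antitoneOn_rpow_neg_mul {α : Type*} [Preorder α] {ψ : α → ℝ} {s : Set α} {b c : ℝ}
    (hb : 1 ≤ b) (hc : 0 ≤ c) (hψ : MonotoneOn ψ s) :
    AntitoneOn (fun y ↦ b ^ (-(c * ψ y))) s := fun _ hx _ hy hxy ↦
  Real.rpow_le_rpow_of_exponent_le hb (neg_le_neg (mul_le_mul_of_nonneg_left (hψ hx hy hxy) hc))

/-- If `ψ : [1,∞) → (0,∞)` is increasing with `ψ(x+1) − ψ(x) ≤ C/x` and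
`C₁ > 0`, then `∫_x^∞ 2^{−C₁ψ(y)} y^{−2} dy ≍ x⁻¹ 2^{−C₁ψ(x)}` on `[1,∞)`: the upper bound
holds with constant `1` and the lower bound with constant `2^{−(C₁C₂+1)}` for some
`C₂ = C₂(C) > 0`. -/
theorem statement16 (C : ℝ) (hC : 0 < C) :
    ∃ C₂ : ℝ, 0 < C₂ ∧
      ∀ ψ : ℝ → ℝ, (∀ x ∈ Set.Ici (1:ℝ), 0 < ψ x) → MonotoneOn ψ (Set.Ici (1:ℝ)) →
        (∀ x ∈ Set.Ici (1:ℝ), ψ (x + 1) - ψ x ≤ C / x) →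
        ∀ C₁ : ℝ, 0 < C₁ → ∀ x ∈ Set.Ici (1:ℝ),
          (∫ y in Set.Ioi x, (2:ℝ) ^ (-(C₁ * ψ y)) / y ^ 2) ≤ (2:ℝ) ^ (-(C₁ * ψ x)) / x ∧
          (2:ℝ) ^ (-(C₁ * C₂ + 1)) * ((2:ℝ) ^ (-(C₁ * ψ x)) / x) ≤
            ∫ y in Set.Ioi x, (2:ℝ) ^ (-(C₁ * ψ y)) / y ^ 2 := by
  refine ⟨2 * C, by positivity, fun ψ _ hmono hψ C₁ hC₁ x hx ↦ ?_⟩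
  have hx₁ : 1 ≤ x := hx
  have hx₀ : 0 < x := by linarith
  have hw : AntitoneOn (fun y ↦ (2 : ℝ) ^ (-(C₁ * ψ y))) (Ici x) :=
    (antitoneOn_rpow_neg_mul one_le_two hC₁.le hmono).mono (Ici_subset_Ici.2 hx₁)
  have hw₀ : ∀ y ∈ Ioi x, 0 ≤ (2 : ℝ) ^ (-(C₁ * ψ y)) := fun _ _ ↦ by positivity
  refine ⟨integral_Ioi_div_sq_le_of_antitoneOn hx₀ hw hw₀, ?_⟩
  have hdouble : ψ (2 * x) ≤ ψ x + 2 * C :=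
    apply_mul_le_add_mul_of_increment_le_div hmono hψ one_le_two hx₁
  calc (2 : ℝ) ^ (-(C₁ * (2 * C) + 1)) * ((2 : ℝ) ^ (-(C₁ * ψ x)) / x)
    _ = (2 : ℝ) ^ (-(C₁ * (ψ x + 2 * C))) * (2 * x)⁻¹ := by
      rw [← mul_div_assoc, ← Real.rpow_add two_pos,
        show -(C₁ * (2 * C) + 1) + -(C₁ * ψ x) = -(C₁ * (ψ x + 2 * C)) - 1 by ring,
        Real.rpow_sub_one two_ne_zero, div_div, div_eq_mul_inv]
    _ ≤ (2 : ℝ) ^ (-(C₁ * ψ (2 * x))) * (2 * x)⁻¹ := by gcongr; exact one_le_two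
    _ = (2 : ℝ) ^ (-(C₁ * ψ (2 * x))) * (x⁻¹ - (2 * x)⁻¹) := by congr 1; field_simp; norm_num
    _ ≤ ∫ y in Ioi x, (2 : ℝ) ^ (-(C₁ * ψ y)) / y ^ 2 :=
      mul_inv_sub_inv_le_integral_Ioi_div_sq_of_antitoneOn hx₀ (by linarith) hw hw₀
end
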